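/- arXiv:2110.15474 — 4 statements merged into one kernel-verified Lean document; each statement's English description precedes it below -/
import Mathlib

section
/- For every positive integer N, R_N(SO_odd) ≤ 13·N; that is, the number of pairs (n, k) with n ≥ 2 and k a nontrivial strictly decreasing tuple of n natural numbers satisfying P_B(k) ≤ N is at most 13N. -/
/-- Weyl dimension (type B): for `k : Fin n → ℕ` (0-indexed; `k i = λ_{i+1} + n - (i+1)`),
with `l_i = k_i + 1/2` and `m_i = (n - 1 - i) + 1/2` (0-indexed),
`PB n k = (∏_{i<j} (l_i² - l_j²)/(m_i² - m_j²)) · ∏_i l_i / m_i`. -/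
def PB (n : ℕ) (k : Fin n → ℕ) : ℚ :=
  (∏ i : Fin n, ∏ j : Fin n,
    if i < j then
      (((k i : ℚ) + 1 / 2) ^ 2 - ((k j : ℚ) + 1 / 2) ^ 2) /
        ((((n : ℚ) - 1 - ((i : ℕ) : ℚ)) + 1 / 2) ^ 2 -
          (((n : ℚ) - 1 - ((j : ℕ) : ℚ)) + 1 / 2) ^ 2)
    else 1) *
  ∏ i : Fin n, ((k i : ℚ) + 1 / 2) / (((n : ℚ) - 1 - ((i : ℕ) : ℚ)) + 1 / 2)

/-- The pairs `(n, k)` counted by `R_N(SO_odd)`: rank `n + 2 ≥ 2`, `k` strictly decreasing,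
nontrivial (`k 0 ≥ rank`), and dimension `PB k ≤ N`. -/
def SOoddSet (N : ℕ) : Set (Σ n : ℕ, Fin (n + 2) → ℕ) :=
  {p | StrictAnti p.2 ∧ p.1 + 2 ≤ p.2 0 ∧ PB (p.1 + 2) p.2 ≤ (N : ℚ)}

def FF (m K : ℕ) (μ : Fin m → ℕ) : ℚ :=
  (2 * (K : ℚ) + 1) / (2 * (m : ℚ) + 1) *
    ∏ j : Fin m, (((K : ℚ) - μ j) * ((K : ℚ) + μ j + 1)) /
      ((1 + ((j : ℕ) : ℚ)) * (2 * (m : ℚ) - ((j : ℕ) : ℚ)))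

theorem PB_cons (m K : ℕ) (μ : Fin m → ℕ) :
    PB (m + 1) (Fin.cons K μ) = FF m K μ * PB m μ := by
  unfold PB FF
  rw [Fin.prod_univ_succ, Fin.prod_univ_succ (fun j : Fin (m+1) => if (0 : Fin (m+1)) < j then _ else _),
    Fin.prod_univ_succ (fun i : Fin (m+1) => (((Fin.cons K μ : Fin (m+1) → ℕ) i : ℚ) + 1 / 2) / _)]
  have h1 : ∀ i : Fin m, (∏ j : Fin (m+1), if i.succ < j then
      ((((Fin.cons K μ : Fin (m+1) → ℕ) i.succ : ℚ) + 1 / 2) ^ 2 - (((Fin.cons K μ : Fin (m+1) → ℕ) j : ℚ) + 1 / 2) ^ 2) /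
        (((((m + 1 : ℕ) : ℚ) - 1 - ((i.succ : ℕ) : ℚ)) + 1 / 2) ^ 2 -
          ((((m + 1 : ℕ) : ℚ) - 1 - ((j : ℕ) : ℚ)) + 1 / 2) ^ 2)
    else 1) = ∏ j : Fin m, if i < j then
      (((μ i : ℚ) + 1 / 2) ^ 2 - ((μ j : ℚ) + 1 / 2) ^ 2) /
        ((((m : ℚ) - 1 - ((i : ℕ) : ℚ)) + 1 / 2) ^ 2 -
          (((m : ℚ) - 1 - ((j : ℕ) : ℚ)) + 1 / 2) ^ 2)
    else 1 := by
    intro i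
    rw [Fin.prod_univ_succ]
    simp only [Fin.not_lt_zero, if_false, one_mul, Fin.succ_lt_succ_iff, Fin.cons_succ]
    refine Finset.prod_congr rfl fun j _ => ?_
    simp only [Fin.val_succ]
    push_cast
    split_ifs
    · congr 1
      ring
    · rfl
  rw [Finset.prod_congr rfl fun i _ => h1 i]
  have h2 : (∏ i : Fin m, ((((Fin.cons K μ : Fin (m+1) → ℕ) i.succ : ℚ) + 1 / 2) /
      ((((m + 1 : ℕ) : ℚ) - 1 - ((i.succ : ℕ) : ℚ)) + 1 / 2))) =
      ∏ i : Fin m, (((μ i : ℚ) + 1 / 2) / (((m : ℚ) - 1 - ((i : ℕ) : ℚ)) + 1 / 2)) := by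
    refine Finset.prod_congr rfl fun j _ => ?_
    simp only [Fin.cons_succ, Fin.val_succ]
    push_cast
    congr 1
    ring
  rw [h2]
  have h3 : (∏ j : Fin m, if (0 : Fin (m+1)) < j.succ then
      ((((Fin.cons K μ : Fin (m+1) → ℕ) 0 : ℚ) + 1 / 2) ^ 2 - (((Fin.cons K μ : Fin (m+1) → ℕ) j.succ : ℚ) + 1 / 2) ^ 2) /
        (((((m + 1 : ℕ) : ℚ) - 1 - (((0 : Fin (m+1)) : ℕ) : ℚ)) + 1 / 2) ^ 2 -
          ((((m + 1 : ℕ) : ℚ) - 1 - ((j.succ : ℕ) : ℚ)) + 1 / 2) ^ 2)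
    else 1) = ∏ j : Fin m, (((K : ℚ) - μ j) * ((K : ℚ) + μ j + 1)) /
      ((1 + ((j : ℕ) : ℚ)) * (2 * (m : ℚ) - ((j : ℕ) : ℚ))) := by
    refine Finset.prod_congr rfl fun j _ => ?_
    simp only [Fin.cons_succ, Fin.val_succ, Fin.succ_pos, if_true, Fin.cons_zero, Fin.val_zero]
    push_cast
    congr 1 <;> ring
  rw [h3]
  have h4 : (((Fin.cons K μ : Fin (m+1) → ℕ) 0 : ℚ) + 1 / 2) /
      ((((m + 1 : ℕ) : ℚ) - 1 - (((0 : Fin (m+1)) : ℕ) : ℚ)) + 1 / 2) =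
      (2 * (K : ℚ) + 1) / (2 * (m : ℚ) + 1) := by
    simp only [Fin.cons_zero, Fin.val_zero]
    push_cast
    rw [show (m : ℚ) + 1 - 1 - 0 + 1 / 2 = m + 1 / 2 by ring,
      div_eq_div_iff (by positivity) (by positivity)]
    ring
  rw [h4]
  simp only [lt_self_iff_false, if_false, one_mul]
  ring

/-! strict anti tuples -/

theorem sa_lower {m : ℕ} {μ : Fin m → ℕ} (h : StrictAnti μ) (j : Fin m) :
    m - 1 - (j : ℕ) ≤ μ j := by
  have key : ∀ d : ℕ, ∀ j : Fin m, m - 1 - (j : ℕ) = d → d ≤ μ j := by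
    intro d
    induction d with
    | zero => intro j _; exact Nat.zero_le _
    | succ d ih =>
      intro j hj
      have hlt : (j : ℕ) + 1 < m := by omega
      have := ih ⟨j + 1, hlt⟩ (by simp; omega)
      have h2 : μ ⟨j + 1, hlt⟩ < μ j := h (by rw [Fin.lt_def]; simp)
      omega
  exact key _ j rfl

theorem sa_upper {m : ℕ} {μ : Fin m → ℕ} {K : ℕ} (h : StrictAnti μ) (hK : ∀ j, μ j < K) (j : Fin m) :
    μ j + (j : ℕ) + 1 ≤ K := by
  have key : ∀ d : ℕ, ∀ j : Fin m, (j : ℕ) = d → μ j + d + 1 ≤ K := by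
    intro d
    induction d with
    | zero => intro j _; have := hK j; omega
    | succ d ih =>
      intro j hj
      have hlt : d < m := by omega
      have := ih ⟨d, hlt⟩ rfl
      have h2 : μ j < μ ⟨d, hlt⟩ := h (by rw [Fin.lt_def]; simp; omega)
      omega
  exact key _ j rfl

def triv (m : ℕ) : Fin m → ℕ := fun j => m - 1 - (j : ℕ)

theorem sa_cons {m : ℕ} {μ : Fin m → ℕ} {K : ℕ} :
    StrictAnti (Fin.cons K μ : Fin (m+1) → ℕ) ↔ (∀ j, μ j < K) ∧ StrictAnti μ := by
  constructor
  · intro h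
    refine ⟨fun j => ?_, fun a b hab => ?_⟩
    · simpa using h (Fin.succ_pos j)
    · simpa using h (Fin.succ_lt_succ_iff.2 hab)
  · rintro ⟨h1, h2⟩ a b hab
    induction a using Fin.cases with
    | zero =>
      induction b using Fin.cases with
      | zero => exact absurd hab (lt_irrefl _)
      | succ b => simpa using h1 b
    | succ a =>
      induction b using Fin.cases with
      | zero => exact absurd hab (Fin.not_lt_zero _)
      | succ b => simpa using h2 (Fin.succ_lt_succ_iff.1 hab)

theorem sa_triv_or {m : ℕ} {μ : Fin m → ℕ} {K : ℕ} (h : StrictAnti μ) (hK : ∀ j, μ j < K)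
    (hne : μ ≠ triv m) : m + 1 ≤ K := by
  by_contra hc
  apply hne
  funext j
  have h1 := sa_lower h j
  have h2 := sa_upper h hK j
  simp only [triv]
  omega

theorem sa_le {m : ℕ} {μ : Fin m → ℕ} {K : ℕ} (h : StrictAnti μ) (hK : ∀ j, μ j < K) : m ≤ K := by
  rcases Nat.eq_zero_or_pos m with h0 | h0
  · omega
  · have h1 := sa_lower h ⟨0, h0⟩
    have h2 := hK ⟨0, h0⟩
    simp at h1
    omega

theorem triv_succ (m : ℕ) : triv (m + 1) = Fin.cons m (triv m) := by
  funext j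
  induction j using Fin.cases with
  | zero => simp [triv]
  | succ j => simp [triv]; omega

theorem triv_sa (m : ℕ) : StrictAnti (triv m) := by
  intro a b hab
  simp only [triv]
  have := b.2
  rw [Fin.lt_def] at hab
  omega

theorem FF_pos {m K : ℕ} {μ : Fin m → ℕ} (hK : ∀ j, μ j < K) : 0 < FF m K μ := by
  unfold FF
  refine mul_pos (by positivity) (Finset.prod_pos fun j _ => ?_)
  have h1 : (μ j : ℚ) < K := by exact_mod_cast hK j
  have h2 : ((j : ℕ) : ℚ) < m := by exact_mod_cast j.2
  have h3 : (0 : ℚ) ≤ (j : ℕ) := by positivity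
  have h4 : (0 : ℚ) ≤ μ j := by positivity
  exact div_pos (mul_pos (by linarith) (by linarith)) (mul_pos (by linarith) (by linarith))

theorem PB_pos : ∀ (m : ℕ) (μ : Fin m → ℕ), StrictAnti μ → 0 < PB m μ := by
  intro m
  induction m with
  | zero => intro μ _; simp [PB]
  | succ m ih =>
    intro μ h
    rw [← Fin.cons_self_tail μ] at h ⊢
    rw [sa_cons] at h
    rw [PB_cons]
    exact mul_pos (FF_pos h.1) (ih _ h.2)

/-! the trivial tail -/

theorem prod_desc (K s : ℕ) :
    (∏ j ∈ Finset.range s, ((K : ℚ) - j) * ((K : ℚ) + j + 1)) = ((K + s).descFactorial (2 * s) : ℚ) := by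
  induction s with
  | zero => simp
  | succ s ih =>
    rw [Finset.prod_range_succ, ih, show 2 * (s + 1) = (2 * s + 1) + 1 by ring,
      show K + (s + 1) = (K + s) + 1 by ring, Nat.succ_descFactorial_succ, Nat.descFactorial_succ]
    rcases le_or_gt s K with h | h
    · have : K + s - 2 * s = K - s := by omega
      rw [this]
      push_cast [Nat.cast_sub h]
      ring
    · have : (K + s).descFactorial (2 * s) = 0 := Nat.descFactorial_eq_zero_iff_lt.2 (by omega)
      rw [this]; simp

theorem FF_triv (m K : ℕ) : FF m K (triv m) =
    (2 * (K : ℚ) + 1) / (2 * (m : ℚ) + 1) * ((K + m).choose (2 * m) : ℚ) := by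
  unfold FF
  congr 1
  rw [Finset.prod_div_distrib]
  have e1 : (∏ j : Fin m, (((K : ℚ) - triv m j) * ((K : ℚ) + triv m j + 1))) =
      ∏ j ∈ Finset.range m, ((K : ℚ) - j) * ((K : ℚ) + j + 1) := by
    rw [← Finset.prod_range_reflect, ← Fin.prod_univ_eq_prod_range
      (fun j => ((K : ℚ) - ((m - 1 - j : ℕ) : ℚ)) * ((K : ℚ) + ((m - 1 - j : ℕ) : ℚ) + 1))]
    rfl
  have e2 : (∏ j : Fin m, ((1 + ((j : ℕ) : ℚ)) * (2 * (m : ℚ) - ((j : ℕ) : ℚ)))) =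
      ∏ j ∈ Finset.range m, ((m : ℚ) - j) * ((m : ℚ) + j + 1) := by
    rw [← Finset.prod_range_reflect, ← Fin.prod_univ_eq_prod_range
      (fun j => ((m : ℚ) - ((m - 1 - j : ℕ) : ℚ)) * ((m : ℚ) + ((m - 1 - j : ℕ) : ℚ) + 1))]
    refine Finset.prod_congr rfl fun j _ => ?_
    have hj := j.2
    rw [Nat.cast_sub (by omega), Nat.cast_sub (by omega)]
    push_cast
    ring
  rw [e1, e2, prod_desc, prod_desc, ← two_mul, Nat.descFactorial_self,
    Nat.descFactorial_eq_factorial_mul_choose]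
  have : ((2 * m).factorial : ℚ) ≠ 0 := by exact_mod_cast Nat.factorial_ne_zero _
  push_cast
  field_simp

theorem PB_triv (m : ℕ) : PB m (triv m) = 1 := by
  induction m with
  | zero => simp [PB]
  | succ m ih =>
    rw [triv_succ, PB_cons, ih, FF_triv, ← two_mul, Nat.choose_self]
    have : (2 * (m : ℚ) + 1) ≠ 0 := by positivity
    field_simp
    simp

def vec (m : ℕ) : Fin (m + 1) → ℕ := Fin.cons (m + 1) (triv m)

theorem PB_vec (m : ℕ) : PB (m + 1) (vec m) = 2 * m + 3 := by
  rw [vec, PB_cons, PB_triv, FF_triv, show m + 1 + m = 2 * m + 1 by ring, Nat.choose_succ_self_right]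
  have : (2 * (m : ℚ) + 1) ≠ 0 := by positivity
  push_cast
  field_simp
  ring

/-- tail `vec` of rank `m+1` -/
theorem FF_vec (m K : ℕ) (hK : m + 2 ≤ K) :
    ((K + (m+1)).choose (2 * (m+1)) : ℚ) / 2 ≤ FF (m + 1) K (vec m) := by
  have hK' : (m : ℚ) + 2 ≤ K := by exact_mod_cast hK
  have hm : (0 : ℚ) ≤ m := by positivity
  have h : FF (m + 1) K (vec m) * (((K : ℚ) - m) * ((K : ℚ) + m + 1)) =
      FF (m + 1) K (triv (m + 1)) * (((K : ℚ) - (m + 1)) * ((K : ℚ) + m + 2)) := by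
    unfold FF
    rw [triv_succ, vec, Fin.prod_univ_succ, Fin.prod_univ_succ]
    simp only [Fin.cons_zero, Fin.cons_succ]
    push_cast
    ring
  rw [FF_triv] at h
  set C := ((K + (m+1)).choose (2 * (m+1)) : ℚ) with hC
  have hC0 : 0 ≤ C := by positivity
  have hpos : 0 < ((K : ℚ) - m) * ((K : ℚ) + m + 1) := mul_pos (by linarith) (by linarith)
  refine le_of_mul_le_mul_right ?_ hpos
  rw [h]
  have h1 : (1 : ℚ) ≤ (2 * (K : ℚ) + 1) / (2 * ((m + 1 : ℕ) : ℚ) + 1) := by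
    rw [one_le_div (by positivity)]
    push_cast
    linarith
  have h2 : C / 2 * (((K : ℚ) - m) * ((K : ℚ) + m + 1)) ≤ C * (((K : ℚ) - (m + 1)) * ((K : ℚ) + m + 2)) := by
    have : (((K : ℚ) - m) * ((K : ℚ) + m + 1)) / 2 ≤ (((K : ℚ) - (m + 1)) * ((K : ℚ) + m + 2)) := by
      nlinarith
    calc _ = C * ((((K : ℚ) - m) * ((K : ℚ) + m + 1)) / 2) := by ring
      _ ≤ _ := mul_le_mul_of_nonneg_left this hC0
  refine h2.trans ?_
  have h3 : 0 ≤ C * (((K : ℚ) - (m + 1)) * ((K : ℚ) + m + 2)) :=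
    mul_nonneg hC0 (mul_nonneg (by linarith) (by linarith))
  calc _ ≤ (2 * (K : ℚ) + 1) / (2 * ((m + 1 : ℕ) : ℚ) + 1) * (C * (((K : ℚ) - (m + 1)) * ((K : ℚ) + m + 2))) :=
        le_mul_of_one_le_left h3 h1
    _ = _ := by ring

/-! general lower bound -/

def XX (m K : ℕ) : ℚ := (2 * (K : ℚ) + 1) / (2 * (m : ℚ) + 1) *
  ∏ j ∈ Finset.range m, (2 * (K : ℚ) - j) / (2 * (m : ℚ) - j)

theorem FF_ge {m K : ℕ} {μ : Fin m → ℕ} (h : StrictAnti μ) (hK : ∀ j, μ j < K) :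
    XX m K ≤ FF m K μ := by
  unfold XX FF
  refine mul_le_mul_of_nonneg_left ?_ (by positivity)
  rw [← Fin.prod_univ_eq_prod_range (fun j => (2 * (K : ℚ) - j) / (2 * (m : ℚ) - j))]
  have hmK := sa_le h hK
  have hmK' : (m : ℚ) ≤ K := by exact_mod_cast hmK
  refine Finset.prod_le_prod (fun j _ => ?_) fun j _ => ?_
  · have h2 : ((j : ℕ) : ℚ) < m := by exact_mod_cast j.2
    have h3 : (0 : ℚ) ≤ (j : ℕ) := by positivity
    exact div_nonneg (by linarith) (by linarith)
  · have h2 : ((j : ℕ) : ℚ) < m := by exact_mod_cast j.2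
    have h3 : (0 : ℚ) ≤ (j : ℕ) := by positivity
    have h4 : (μ j : ℚ) + (j : ℕ) + 1 ≤ K := by exact_mod_cast sa_upper h hK j
    have h5 : (0 : ℚ) ≤ μ j := by positivity
    rw [div_le_div_iff₀ (by linarith) (mul_pos (by linarith) (by linarith)), ← mul_assoc]
    refine mul_le_mul_of_nonneg_right ?_ (by linarith)
    nlinarith

theorem XX_nonneg {m K : ℕ} (h : m ≤ K) : 0 ≤ XX m K := by
  unfold XX
  refine mul_nonneg (by positivity) (Finset.prod_nonneg fun j hj => ?_)
  have hmK' : (m : ℚ) ≤ K := by exact_mod_cast h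
  have h2 : (j : ℚ) < m := by exact_mod_cast Finset.mem_range.1 hj
  exact div_nonneg (by linarith) (by linarith)

theorem XX_step (m K : ℕ) (h : m + 1 ≤ K) : XX m K ≤ XX (m + 1) (K + 1) := by
  have hX := XX_nonneg (m := m) (K := K) (by omega)
  have hmK' : (m : ℚ) + 1 ≤ K := by exact_mod_cast h
  have hm : (0 : ℚ) ≤ m := by positivity
  have e1 : (∏ j ∈ Finset.range (m + 1), (2 * ((K + 1 : ℕ) : ℚ) - j) / (2 * ((m + 1 : ℕ) : ℚ) - j)) =
      (∏ j ∈ Finset.range m, (2 * (K : ℚ) + 1 - j) / (2 * (m : ℚ) + 1 - j)) *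
        ((2 * (K : ℚ) + 2) / (2 * (m : ℚ) + 2)) := by
    rw [Finset.prod_range_succ']
    congr 1
    · refine Finset.prod_congr rfl fun j _ => ?_
      push_cast
      congr 1 <;> ring
    · push_cast
      congr 1 <;> ring
  have e2 : (∏ j ∈ Finset.range m, (2 * (K : ℚ) + 1 - j) / (2 * (m : ℚ) + 1 - j)) *
      ((2 * (K : ℚ) + 1 - m) / (2 * (m : ℚ) + 1 - m)) = XX m K := by
    rw [← Finset.prod_range_succ (fun j : ℕ => (2 * (K : ℚ) + 1 - j) / (2 * (m : ℚ) + 1 - j)),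
      Finset.prod_range_succ', XX, mul_comm]
    congr 1
    · simp
    · refine Finset.prod_congr rfl fun j _ => ?_
      push_cast
      congr 1 <;> ring
  set P := (∏ j ∈ Finset.range m, (2 * (K : ℚ) + 1 - j) / (2 * (m : ℚ) + 1 - j)) with hP
  have hP0 : 0 ≤ P := by
    refine Finset.prod_nonneg fun j hj => ?_
    have h2 : (j : ℚ) < m := by exact_mod_cast Finset.mem_range.1 hj
    exact div_nonneg (by linarith) (by linarith)
  rw [← e2, XX, e1]
  calc P * ((2 * (K : ℚ) + 1 - m) / (2 * (m : ℚ) + 1 - m)) ≤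
      P * ((2 * ((K + 1 : ℕ) : ℚ) + 1) / (2 * ((m + 1 : ℕ) : ℚ) + 1) * ((2 * (K : ℚ) + 2) / (2 * (m : ℚ) + 2))) := by
        refine mul_le_mul_of_nonneg_left ?_ hP0
        push_cast
        rw [div_mul_div_comm, div_le_div_iff₀ (by linarith) (by positivity)]
        obtain ⟨e, rfl⟩ := Nat.exists_eq_add_of_le h
        push_cast
        have he : (0 : ℚ) ≤ e := by positivity
        have : 0 ≤ (2 * (m : ℚ) + 2) * ((1 + (e:ℚ)) * (2 * e + 1)) := by positivity
        nlinarith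
    _ = _ := by ring

theorem XX_two (m e : ℕ) (he : 1 ≤ e) :
    (2 * (e : ℚ) + 3) * (2 * e + 4) * (2 * e + 5) / 60 ≤ XX (m + 2) (m + 2 + e) := by
  induction m with
  | zero =>
    refine le_of_eq ?_
    simp only [XX, Finset.prod_range_succ, Finset.prod_range_zero]
    push_cast
    ring
  | succ m ih =>
    refine ih.trans ?_
    have := XX_step (m + 2) (m + 2 + e) (by omega)
    rw [show m + 1 + 2 = m + 2 + 1 by ring, show m + 2 + 1 + e = m + 2 + e + 1 by ring]
    exact this

/-! summation -/

open scoped ENNReal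

theorem tele (f : ℕ → ℝ≥0∞) (u : ℕ → ℝ) (a : ℕ) (h0 : ∀ K, K < a → f K = 0)
    (h1 : ∀ K, a ≤ K → f K ≤ ENNReal.ofReal (u K - u (K + 1)))
    (h2 : ∀ K, a ≤ K → u (K + 1) ≤ u K) (h3 : ∀ K, a ≤ K → 0 ≤ u K) :
    ∑' K, f K ≤ ENNReal.ofReal (u a) := by
  refine ENNReal.tsum_le_of_sum_range_le fun n => ?_
  rcases le_or_gt n a with h | h
  · rw [Finset.sum_eq_zero fun i hi => h0 i (by have := Finset.mem_range.1 hi; omega)]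
    exact zero_le
  · obtain ⟨d, rfl⟩ := Nat.exists_eq_add_of_le h.le
    have key : ∀ d, u (a + d) ≤ u a ∧
        ∑ i ∈ Finset.range (a + d), f i ≤ ENNReal.ofReal (u a - u (a + d)) := by
      intro d
      induction d with
      | zero =>
        refine ⟨le_rfl, ?_⟩
        rw [Finset.sum_eq_zero fun i hi => h0 i (by have := Finset.mem_range.1 hi; omega)]
        exact zero_le
      | succ d ih =>
        have hs := h2 (a + d) (by omega)
        refine ⟨hs.trans ih.1, ?_⟩
        rw [← add_assoc, Finset.sum_range_succ]
        refine (add_le_add ih.2 (h1 (a + d) (by omega))).trans ?_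
        rw [← ENNReal.ofReal_add (by linarith [ih.1]) (by linarith)]
        exact ENNReal.ofReal_le_ofReal (by linarith)
    refine (key d).2.trans (ENNReal.ofReal_le_ofReal ?_)
    linarith [h3 (a + d) (by omega)]

open Classical in
noncomputable def TT (m : ℕ) (k : Fin m → ℕ) : ℝ≥0∞ :=
  if StrictAnti k then ENNReal.ofReal (((PB m k)⁻¹ : ℚ) : ℝ) else 0

open Classical in
noncomputable def Wf (m : ℕ) (k : Fin (m + 1) → ℕ) : ℝ≥0∞ :=
  if k = triv (m + 1) ∨ k = vec m then 0 else TT (m + 1) k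

noncomputable def WW (m : ℕ) : ℝ≥0∞ := ∑' k, Wf m k

theorem tsum_cons (m : ℕ) (f : (Fin (m + 1) → ℕ) → ℝ≥0∞) :
    ∑' k, f k = ∑' μ : Fin m → ℕ, ∑' K : ℕ, f (Fin.cons K μ) := by
  rw [← (Fin.consEquiv (fun _ : Fin (m+1) => ℕ)).tsum_eq f]
  rw [ENNReal.tsum_prod', ENNReal.tsum_comm]
  rfl

theorem TT_cons (m K : ℕ) (μ : Fin m → ℕ) (hK : ∀ j, μ j < K) :
    TT (m + 1) (Fin.cons K μ) = TT m μ * ENNReal.ofReal (((FF m K μ)⁻¹ : ℚ) : ℝ) := by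
  unfold TT
  by_cases h : StrictAnti μ
  · rw [if_pos h, if_pos (sa_cons.2 ⟨hK, h⟩), PB_cons, ← ENNReal.ofReal_mul, mul_inv, mul_comm]
    · push_cast
      rfl
    · have := PB_pos m μ h
      have h2 : 0 ≤ (PB m μ)⁻¹ := by positivity
      exact_mod_cast h2
  · rw [if_neg h, if_neg (fun h' => h (sa_cons.1 h').2), zero_mul]

theorem inner_zero (m : ℕ) (μ : Fin m → ℕ) (h : ¬ StrictAnti μ) :
    ∑' K : ℕ, Wf m (Fin.cons K μ) = 0 := by
  rw [ENNReal.tsum_eq_zero]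
  intro K
  unfold Wf TT
  rw [if_neg (fun h' => h (sa_cons.1 h').2)]
  simp

theorem inner_le (m : ℕ) (μ : Fin m → ℕ) (a : ℕ) (u : ℕ → ℝ)
    (h1 : ∀ K, StrictAnti μ → (∀ j, μ j < K) → (Fin.cons K μ : Fin (m+1) → ℕ) ≠ triv (m + 1) →
      (Fin.cons K μ : Fin (m+1) → ℕ) ≠ vec m →
      a ≤ K ∧ (((FF m K μ)⁻¹ : ℚ) : ℝ) ≤ u K - u (K + 1))
    (h2 : ∀ K, a ≤ K → u (K + 1) ≤ u K) (h3 : ∀ K, a ≤ K → 0 ≤ u K) :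
    ∑' K : ℕ, Wf m (Fin.cons K μ) ≤ TT m μ * ENNReal.ofReal (u a) := by
  by_cases hμ : StrictAnti μ
  swap
  · rw [inner_zero m μ hμ]; exact zero_le
  classical
  set g : ℕ → ℝ≥0∞ := fun K => if a ≤ K then ENNReal.ofReal (u K - u (K + 1)) else 0 with hg
  have hle : ∀ K, Wf m (Fin.cons K μ) ≤ TT m μ * g K := by
    intro K
    unfold Wf
    split_ifs with h
    · exact zero_le
    · push Not at h
      by_cases hK : ∀ j, μ j < K
      · obtain ⟨ha, hb⟩ := h1 K hμ hK h.1 h.2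
        rw [TT_cons m K μ hK, hg]
        simp only [ha, if_true]
        gcongr
      · unfold TT
        rw [if_neg (fun h' => hK (sa_cons.1 h').1)]
        exact zero_le
  refine (ENNReal.tsum_le_tsum hle).trans ?_
  rw [ENNReal.tsum_mul_left]
  gcongr
  refine tele g u a (fun K hK => ?_) (fun K hK => ?_) h2 h3
  · simp only [hg]; rw [if_neg (by omega)]
  · simp only [hg]; rw [if_pos hK]

/-! telescoping for binomials -/

noncomputable def uu (m : ℕ) (K : ℕ) : ℝ :=
  (2 * (m : ℝ) + 2) / (2 * m + 1) / ((K + m).choose (2 * m + 1) : ℝ)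

theorem uu_nonneg (m K : ℕ) : 0 ≤ uu m K := by unfold uu; positivity

theorem uu_diff (m K : ℕ) (hK : m + 2 ≤ K) :
    ((K + (m + 1)).choose (2 * (m + 1)) : ℝ)⁻¹ = uu m K - uu m (K + 1) := by
  obtain ⟨e, rfl⟩ := Nat.exists_eq_add_of_le hK
  unfold uu
  have a1 : m + 2 + e + (m + 1) = (2 * m + 2 + e) + 1 := by ring
  have a2 : m + 2 + e + m = 2 * m + 2 + e := by ring
  have a3 : m + 2 + e + 1 + m = (2 * m + 2 + e) + 1 := by ring
  have a4 : 2 * (m + 1) = (2 * m + 1) + 1 := by ring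
  rw [a1, a2, a3, a4]
  set r := 2 * m + 1 with hr
  set n := 2 * m + 2 + e with hn
  have p1 : 0 < n.choose r := Nat.choose_pos (by omega)
  have p2 : 0 < (n+1).choose r := Nat.choose_pos (by omega)
  have p3 : 0 < (n+1).choose (r + 1) := Nat.choose_pos (by omega)
  -- relations
  have q1 : (n + 1) * n.choose r = (n + 1).choose (r + 1) * (r + 1) := Nat.add_one_mul_choose_eq n r
  have q2 : (n + 1).choose (r + 1) * (r + 1) = (n + 1).choose r * (n + 1 - r) := Nat.choose_succ_right_eq _ _
  have hsub : n + 1 - r = e + 2 := by omega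
  rw [hsub] at q2
  have r1 : ((n : ℝ) + 1) * (n.choose r : ℝ) = ((n + 1).choose (r + 1) : ℝ) * (r + 1) := by exact_mod_cast q1
  have r2 : ((n + 1).choose (r + 1) : ℝ) * (r + 1) = ((n + 1).choose r : ℝ) * (e + 2) := by exact_mod_cast q2
  have hnr : (n : ℝ) = r + 1 + e := by rw [hn, hr]; push_cast; ring
  have hmr : 2 * (m : ℝ) + 2 = r + 1 := by rw [hr]; push_cast; ring
  have hmr' : 2 * (m : ℝ) + 1 = r := by rw [hr]; push_cast; ring
  rw [hmr, hmr']
  have hr0 : (0 : ℝ) < r := by rw [hr]; positivity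
  have P1 : (0 : ℝ) < n.choose r := by exact_mod_cast p1
  have P2 : (0 : ℝ) < (n+1).choose r := by exact_mod_cast p2
  have P3 : (0 : ℝ) < (n+1).choose (r + 1) := by exact_mod_cast p3
  have he : (0 : ℝ) ≤ e := by positivity
  have s1 : (n.choose r : ℝ) = ((n + 1).choose (r + 1) : ℝ) * (r + 1) / (r + 2 + e) := by
    rw [eq_div_iff (by positivity), ← r1, hnr]; ring
  have s2 : ((n + 1).choose r : ℝ) = ((n + 1).choose (r + 1) : ℝ) * (r + 1) / (e + 2) := by
    rw [eq_div_iff (by positivity), r2]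
  rw [s1, s2]
  field_simp
  ring

theorem uu_one (m : ℕ) : uu m (m + 2) = 1 / (2 * m + 1) := by
  unfold uu
  rw [show m + 2 + m = (2 * m + 1) + 1 by ring, Nat.choose_succ_self_right]
  push_cast
  field_simp
  ring

theorem uu_two (m : ℕ) : uu m (m + 3) = 2 / ((2 * m + 1) * (2 * m + 3)) := by
  unfold uu
  have : (m + 3 + m).choose (2 * m + 1) * 2 = (2 * m + 3) * (2 * m + 2) := by
    rw [show m + 3 + m = 2 + (2 * m + 1) by ring, ← Nat.choose_symm_add, Nat.choose_two_right]
    rw [Nat.div_mul_cancel]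
    · rw [show 2 + (2 * m + 1) - 1 = 2 * m + 2 by omega]; ring
    · rw [show 2 + (2 * m + 1) - 1 = 2 * (m + 1) by omega]
      exact ⟨(2 + (2 * m + 1)) * (m + 1), by ring⟩
  have h : ((m + 3 + m).choose (2 * m + 1) : ℝ) = (2 * m + 3) * (2 * m + 2) / 2 := by
    rw [eq_div_iff (by norm_num)]; exact_mod_cast this
  rw [h]
  field_simp

theorem inner_triv (m : ℕ) : ∑' K : ℕ, Wf (m + 1) (Fin.cons K (triv (m + 1))) ≤
    ENNReal.ofReal (2 / ((2 * m + 1) * (2 * m + 3))) := by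
  refine (inner_le (m + 1) (triv (m + 1)) (m + 3) (uu m) ?_ ?_ fun K _ => uu_nonneg m K).trans ?_
  · intro K hs hK hn1 hn2
    have h0 := sa_le hs hK
    have h1 : K ≠ m + 1 := by
      rintro rfl; exact hn1 (triv_succ (m + 1)).symm
    have h2 : K ≠ m + 2 := by
      rintro rfl; exact hn2 rfl
    refine ⟨by omega, ?_⟩
    rw [← uu_diff m K (by omega), FF_triv]
    have hc : (0 : ℚ) < ((K + (m + 1)).choose (2 * (m + 1)) : ℚ) := by
      exact_mod_cast Nat.choose_pos (by omega)
    have h3 : (1 : ℚ) ≤ (2 * (K : ℚ) + 1) / (2 * ((m + 1 : ℕ) : ℚ) + 1) := by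
      rw [one_le_div (by positivity)]
      have : ((m + 1 : ℕ) : ℚ) ≤ K := by exact_mod_cast h0
      linarith
    have h4 : ((2 * (K : ℚ) + 1) / (2 * ((m + 1 : ℕ) : ℚ) + 1) * ((K + (m + 1)).choose (2 * (m + 1)) : ℚ))⁻¹ ≤
        ((K + (m + 1)).choose (2 * (m + 1)) : ℚ)⁻¹ :=
      inv_anti₀ hc (le_mul_of_one_le_left hc.le h3)
    have h5 : (((((2 * (K : ℚ) + 1) / (2 * ((m + 1 : ℕ) : ℚ) + 1) * ((K + (m + 1)).choose (2 * (m + 1)) : ℚ))⁻¹ : ℚ)) : ℝ) ≤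
        ((((K + (m + 1)).choose (2 * (m + 1)) : ℚ)⁻¹ : ℚ) : ℝ) := by exact_mod_cast h4
    refine h5.trans (le_of_eq ?_)
    push_cast
    rfl
  · intro K hK
    have := uu_diff m K (by omega)
    have h2 : (0 : ℝ) ≤ ((K + (m + 1)).choose (2 * (m + 1)) : ℝ)⁻¹ := by positivity
    linarith
  · have : TT (m + 1) (triv (m + 1)) = 1 := by
      unfold TT
      rw [if_pos (triv_sa _), PB_triv]
      simp
    rw [this, one_mul, uu_two]

theorem vec_sa (m : ℕ) : StrictAnti (vec m) := by
  refine sa_cons.2 ⟨fun j => ?_, triv_sa m⟩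
  simp only [triv]
  omega

theorem triv_ne_vec (m : ℕ) : triv (m + 1) ≠ vec m := by
  intro h
  have := congrFun h 0
  simp [triv, vec] at this

theorem inner_vec (m : ℕ) : ∑' K : ℕ, Wf (m + 1) (Fin.cons K (vec m)) ≤
    ENNReal.ofReal (2 / ((2 * m + 1) * (2 * m + 3))) := by
  refine (inner_le (m + 1) (vec m) (m + 2) (fun K => 2 * uu m K) ?_ ?_
    fun K _ => by have := uu_nonneg m K; positivity).trans ?_
  · intro K hs hK hn1 hn2
    have h0 : m + 2 ≤ K := sa_triv_or hs hK (triv_ne_vec m).symm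
    refine ⟨h0, ?_⟩
    rw [← mul_sub, ← uu_diff m K (by omega)]
    have hc : (0 : ℚ) < ((K + (m + 1)).choose (2 * (m + 1)) : ℚ) := by
      exact_mod_cast Nat.choose_pos (by omega)
    have h4 := inv_anti₀ (by positivity) (FF_vec m K h0)
    have h5 : (((FF (m + 1) K (vec m))⁻¹ : ℚ) : ℝ) ≤
        (((((K + (m + 1)).choose (2 * (m + 1)) : ℚ) / 2)⁻¹ : ℚ) : ℝ) := by exact_mod_cast h4
    refine h5.trans (le_of_eq ?_)
    push_cast
    rw [inv_div]
    rfl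
  · intro K hK
    have := uu_diff m K (by omega)
    have h2 : (0 : ℝ) ≤ ((K + (m + 1)).choose (2 * (m + 1)) : ℝ)⁻¹ := by positivity
    linarith
  · unfold TT
    rw [if_pos (vec_sa _), PB_vec, uu_one, ← ENNReal.ofReal_mul]
    · refine ENNReal.ofReal_le_ofReal (le_of_eq ?_)
      push_cast
      field_simp
    · push_cast
      positivity

theorem inner_other (m : ℕ) (μ : Fin (m + 2) → ℕ) (hμ : μ ≠ triv (m + 2)) :
    ∑' K : ℕ, Wf (m + 2) (Fin.cons K μ) ≤ TT (m + 2) μ * ENNReal.ofReal (3 / 5) := by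
  refine (inner_le (m + 2) μ (m + 3) (fun K => 15 / (2 * ((K : ℝ) - (m + 2)) + 3) ^ 2) ?_ ?_
    fun K _ => by positivity).trans ?_
  · intro K hs hK hn1 hn2
    have h0 : m + 3 ≤ K := sa_triv_or hs hK hμ
    refine ⟨h0, ?_⟩
    obtain ⟨e, rfl⟩ := Nat.exists_eq_add_of_le (show m + 2 ≤ K by omega)
    have h1 := (XX_two m e (by omega)).trans (FF_ge hs hK)
    have h4 := inv_anti₀ (by positivity) h1
    have h5 : (((FF (m + 2) (m + 2 + e) μ)⁻¹ : ℚ) : ℝ) ≤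
        ((((2 * (e : ℚ) + 3) * (2 * e + 4) * (2 * e + 5) / 60)⁻¹ : ℚ) : ℝ) := by exact_mod_cast h4
    refine h5.trans ?_
    push_cast
    rw [show (m : ℝ) + 2 + e - (m + 2) = e by ring, show (m : ℝ) + 2 + e + 1 - (m + 2) = e + 1 by ring,
      inv_div, div_sub_div _ _ (by positivity) (by positivity), div_le_div_iff₀ (by positivity) (by positivity)]
    have he : (0 : ℝ) ≤ e := by positivity
    have key : 15 * (2 * ((e : ℝ) + 1) + 3) ^ 2 - (2 * (e : ℝ) + 3) ^ 2 * 15 = 60 * (2 * e + 4) := by ring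
    rw [key]
    have : (2 * (e : ℝ) + 3) * (2 * e + 5) ≤ (2 * e + 4) ^ 2 := by nlinarith
    have h6 := mul_le_mul_of_nonneg_left this (show 0 ≤ 60 * ((2 * (e : ℝ) + 3) * (2 * e + 5)) by positivity)
    nlinarith
  · intro K hK
    have hK' : (m : ℝ) + 3 ≤ K := by exact_mod_cast hK
    push_cast
    have h1 : 0 < 2 * ((K : ℝ) - (m + 2)) + 3 := by linarith
    refine div_le_div_of_nonneg_left (by norm_num) (by positivity) ?_
    refine pow_le_pow_left₀ h1.le (by linarith) 2
  · refine mul_le_mul_right (ENNReal.ofReal_le_ofReal ?_) _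
    push_cast
    rw [show 2 * ((m : ℝ) + 3 - (m + 2)) + 3 = 5 by ring]
    norm_num

theorem WW_step (m : ℕ) : WW (m + 2) ≤
    ENNReal.ofReal (4 / ((2 * m + 3) * (2 * m + 5))) + ENNReal.ofReal (3 / 5) * WW (m + 1) := by
  classical
  unfold WW
  rw [tsum_cons]
  set c := ENNReal.ofReal (2 / ((2 * ((m + 1 : ℕ) : ℝ) + 1) * (2 * ((m + 1 : ℕ) : ℝ) + 3))) with hc
  have hle : ∀ μ : Fin (m + 2) → ℕ, ∑' K : ℕ, Wf (m + 2) (Fin.cons K μ) ≤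
      ((if μ = triv (m + 2) then c else 0) + (if μ = vec (m + 1) then c else 0)) +
        ENNReal.ofReal (3 / 5) * Wf (m + 1) μ := by
    intro μ
    by_cases h1 : μ = triv (m + 2)
    · rw [if_pos h1, h1]
      exact (inner_triv (m + 1)).trans (le_self_add.trans le_self_add)
    · by_cases h2 : μ = vec (m + 1)
      · rw [if_neg h1, if_pos h2, h2, zero_add]
        exact (inner_vec (m + 1)).trans le_self_add
      · have : Wf (m + 1) μ = TT (m + 2) μ := by
          unfold Wf
          rw [if_neg (by tauto)]
        rw [if_neg h1, if_neg h2, zero_add, zero_add, this, mul_comm]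
        exact inner_other m μ h1
  refine (ENNReal.tsum_le_tsum hle).trans ?_
  rw [ENNReal.tsum_add, ENNReal.tsum_add, tsum_ite_eq, tsum_ite_eq, ENNReal.tsum_mul_left]
  gcongr
  rw [hc, ← ENNReal.ofReal_add (by positivity) (by positivity)]
  refine ENNReal.ofReal_le_ofReal (le_of_eq ?_)
  push_cast
  rw [show 2 * ((m : ℝ) + 1) + 1 = 2 * m + 3 by ring, show 2 * ((m : ℝ) + 1) + 3 = 2 * m + 5 by ring,
    ← add_div]
  norm_num

/-! rank two -/

theorem inner_rank2 (μ : Fin 1 → ℕ) (hμ : μ ≠ triv 1) :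
    ∑' K : ℕ, Wf 1 (Fin.cons K μ) ≤ TT 1 μ * ENNReal.ofReal (3 / (2 * (μ 0 : ℝ) + 1)) := by
  refine (inner_le 1 μ (μ 0 + 1) (fun K => 3 / (2 * (K : ℝ) - 1)) ?_ ?_ ?_).trans ?_
  · intro K hs hK hn1 hn2
    have h0 := hK 0
    refine ⟨h0, ?_⟩
    have h1 := FF_ge hs hK
    have e : XX 1 K = (2 * (K : ℚ) + 1) * K / 3 := by
      simp [XX]; ring
    rw [e] at h1
    have hK0 : 0 < K := by omega
    have hKq : (0 : ℚ) < K := by exact_mod_cast hK0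
    have h4 := inv_anti₀ (by positivity) h1
    have h5 : (((FF 1 K μ)⁻¹ : ℚ) : ℝ) ≤ ((((2 * (K : ℚ) + 1) * K / 3)⁻¹ : ℚ) : ℝ) := by exact_mod_cast h4
    refine h5.trans ?_
    have hK1 : (1 : ℝ) ≤ K := by exact_mod_cast hK0
    push_cast
    rw [show 2 * ((K : ℝ) + 1) - 1 = 2 * K + 1 by ring,
      inv_div, div_sub_div _ _ (by linarith) (by positivity), div_le_div_iff₀ (by positivity)
        (mul_pos (by linarith) (by positivity))]
    nlinarith
  · intro K hK
    have hK1 : (1 : ℝ) ≤ K := by exact_mod_cast (show 1 ≤ K by omega)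
    push_cast
    exact div_le_div_of_nonneg_left (by norm_num) (by linarith) (by linarith)
  · intro K hK
    have hK1 : (1 : ℝ) ≤ K := by exact_mod_cast (show 1 ≤ K by omega)
    exact div_nonneg (by norm_num) (by linarith)
  · gcongr
    push_cast
    linarith

theorem TT_one (μ : Fin 1 → ℕ) : TT 1 μ = ENNReal.ofReal (1 / (2 * (μ 0 : ℝ) + 1)) := by
  unfold TT
  rw [if_pos (Subsingleton.strictAnti μ)]
  congr 1
  have : PB 1 μ = 2 * (μ 0 : ℚ) + 1 := by
    simp [PB]; ring
  rw [this]
  push_cast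
  rw [one_div]

theorem WW_one : WW 1 ≤ ENNReal.ofReal (17 / 12) := by
  classical
  unfold WW
  rw [tsum_cons]
  set φ : ℕ → ℝ≥0∞ := fun p => if 1 ≤ p then ENNReal.ofReal (3 / (2 * (p : ℝ) + 1) ^ 2) else 0 with hφ
  have hle : ∀ μ : Fin 1 → ℕ, ∑' K : ℕ, Wf 1 (Fin.cons K μ) ≤
      (if μ = triv 1 then ENNReal.ofReal (2 / 3) else 0) + φ (μ 0) := by
    intro μ
    by_cases h1 : μ = triv 1
    · rw [if_pos h1, h1]
      refine le_trans ?_ le_self_add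
      refine (inner_triv 0).trans ?_
      norm_num
    · have h2 : 1 ≤ μ 0 := by
        by_contra hc
        apply h1
        funext j
        have : j = 0 := Subsingleton.elim _ _
        subst this
        simp [triv]
        omega
      rw [if_neg h1, zero_add]
      refine (inner_rank2 μ h1).trans ?_
      simp only [hφ]
      rw [if_pos h2, TT_one, ← ENNReal.ofReal_mul (by positivity)]
      refine ENNReal.ofReal_le_ofReal (le_of_eq ?_)
      field_simp
  refine (ENNReal.tsum_le_tsum hle).trans ?_
  rw [ENNReal.tsum_add, tsum_ite_eq]
  have e : ∑' μ : Fin 1 → ℕ, φ (μ 0) = ∑' p, φ p :=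
    (Equiv.funUnique (Fin 1) ℕ).tsum_eq φ
  rw [e]
  have ht : ∑' p, φ p ≤ ENNReal.ofReal ((3 / 4) / ((1 : ℕ) : ℝ)) := by
    refine tele φ (fun p => (3 / 4) / (p : ℝ)) 1 ?_ ?_ ?_ ?_
    · intro K hK
      simp only [hφ]; rw [if_neg (by omega)]
    · intro K hK
      simp only [hφ]; rw [if_pos hK]
      refine ENNReal.ofReal_le_ofReal ?_
      have hK1 : (1 : ℝ) ≤ K := by exact_mod_cast hK
      push_cast
      rw [div_sub_div _ _ (by positivity) (by positivity), div_le_div_iff₀ (by positivity) (by positivity)]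
      nlinarith
    · intro K hK
      have hK1 : (1 : ℝ) ≤ K := by exact_mod_cast hK
      push_cast
      exact div_le_div_of_nonneg_left (by norm_num) (by linarith) (by linarith)
    · intro K _
      positivity
  refine (add_le_add le_rfl ht).trans ?_
  rw [← ENNReal.ofReal_add (by norm_num) (by norm_num)]
  refine ENNReal.ofReal_le_ofReal ?_
  norm_num

noncomputable def ww : ℕ → ℝ
  | 0 => 17 / 12
  | m + 1 => 4 / ((2 * m + 3) * (2 * m + 5)) + 3 / 5 * ww m

theorem ww_nonneg (m : ℕ) : 0 ≤ ww m := by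
  induction m with
  | zero => norm_num [ww]
  | succ m ih => rw [ww]; positivity

theorem WW_le (m : ℕ) : WW (m + 1) ≤ ENNReal.ofReal (ww m) := by
  induction m with
  | zero => exact WW_one
  | succ m ih =>
    refine (WW_step m).trans ?_
    have := ww_nonneg m
    rw [ww, ENNReal.ofReal_add (by positivity) (by positivity), ENNReal.ofReal_mul (by norm_num)]
    gcongr

theorem ww_sum (M : ℕ) : ∑ i ∈ Finset.range (M + 1), ww i + 3 / 2 * ww M ≤
    6 - 5 / (2 * M + 3) := by
  induction M with
  | zero => norm_num [ww]
  | succ M ih =>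
    rw [Finset.sum_range_succ]
    have e : ww (M + 1) = 4 / ((2 * M + 3) * (2 * M + 5)) + 3 / 5 * ww M := rfl
    have h : (4 : ℝ) / ((2 * M + 3) * (2 * M + 5)) = 2 / (2 * M + 3) - 2 / (2 * M + 5) := by
      field_simp; ring
    have h1 : (5 : ℝ) / (2 * M + 3) = 5 / 2 * (2 / (2 * M + 3)) := by ring
    have h2 : (5 : ℝ) / (2 * ((M + 1 : ℕ) : ℝ) + 3) = 5 / 2 * (2 / (2 * M + 5)) := by
      push_cast
      rw [show 2 * ((M : ℝ) + 1) + 3 = 2 * M + 5 by ring]; ring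
    rw [h1] at ih
    rw [h2, e, h]
    linarith

theorem total : ∑' m, WW (m + 1) ≤ 6 := by
  refine (ENNReal.tsum_le_tsum WW_le).trans ?_
  refine ENNReal.tsum_le_of_sum_range_le fun n => ?_
  rw [← ENNReal.ofReal_sum_of_nonneg fun i _ => ww_nonneg i]
  rw [show (6 : ℝ≥0∞) = ENNReal.ofReal 6 by norm_num]
  refine ENNReal.ofReal_le_ofReal ?_
  have h := ww_sum n
  rw [Finset.sum_range_succ] at h
  have h1 := ww_nonneg n
  have h2 : (0 : ℝ) ≤ 5 / (2 * n + 3) := by positivity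
  linarith

theorem soOdd_count_le (N : ℕ) (hN : 0 < N) :
    (SOoddSet N).Finite ∧ (SOoddSet N).ncard ≤ 13 * N := by
  classical
  set f : (Σ n : ℕ, Fin (n + 2) → ℕ) → ℝ≥0∞ := fun p => Wf (p.1 + 1) p.2 with hf
  have hsum : ∑' p, f p ≤ 6 := by
    rw [ENNReal.tsum_sigma']
    exact total
  have hN0 : (N : ℝ≥0∞) ≠ 0 := by exact_mod_cast hN.ne'
  have hNt : (N : ℝ≥0∞) ≠ ⊤ := ENNReal.natCast_ne_top N
  obtain ⟨hfin, hcard⟩ := ENNReal.finset_card_const_le_le_of_tsum_le (by norm_num) hsum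
    (ε := (N : ℝ≥0∞)⁻¹) (ENNReal.inv_ne_zero.2 hNt)
  set R := {i | (N : ℝ≥0∞)⁻¹ ≤ f i} with hR
  have hRc : R.ncard ≤ 6 * N := by
    rw [Set.ncard_eq_toFinset_card R hfin]
    rw [div_eq_mul_inv, inv_inv] at hcard
    exact_mod_cast hcard
  set V : Finset (Σ n : ℕ, Fin (n + 2) → ℕ) :=
    (Finset.range N).image (fun n => ⟨n, vec (n + 1)⟩) with hV
  have hVc : V.card ≤ N := by
    refine Finset.card_image_le.trans ?_
    simp
  have hsub : SOoddSet N ⊆ R ∪ (V : Set _) := by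
    rintro ⟨n, k⟩ ⟨hs, h0, hP⟩
    simp only at hs h0 hP
    by_cases hv : k = vec (n + 1)
    · right
      subst hv
      rw [PB_vec] at hP
      rw [hV, Finset.mem_coe, Finset.mem_image]
      refine ⟨n, ?_, rfl⟩
      rw [Finset.mem_range]
      have h1 : 2 * (n + 1) + 3 ≤ N := by exact_mod_cast hP
      omega
    · left
      have ht : k ≠ triv (n + 2) := by
        rintro rfl
        simp [triv] at h0
      simp only [hR, hf, Set.mem_ofPred_eq]
      unfold Wf TT
      rw [if_neg (by tauto), if_pos hs]
      have hpos := PB_pos _ k hs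
      have h1 := inv_anti₀ hpos hP
      have h2 : (((N : ℚ)⁻¹ : ℚ) : ℝ) ≤ (((PB (n + 2) k)⁻¹ : ℚ) : ℝ) := by exact_mod_cast h1
      refine le_trans (le_of_eq ?_) (ENNReal.ofReal_le_ofReal h2)
      push_cast
      rw [ENNReal.ofReal_inv_of_pos (by exact_mod_cast hN), ENNReal.ofReal_natCast]
  have hfinU : (R ∪ (V : Set _)).Finite := hfin.union V.finite_toSet
  refine ⟨hfinU.subset hsub, ?_⟩
  refine (Set.ncard_le_ncard hsub hfinU).trans ?_
  refine (Set.ncard_union_le _ _).trans ?_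
  rw [Set.ncard_coe_finset]
  omega
end

section
/- For every positive integer N, R_N(Sp) ≤ 13·N; that is, the number of pairs (n, l) with n ≥ 1 and l a nontrivial strictly decreasing tuple of n positive integers satisfying P_C(l) ≤ N is at most 13N. -/
/-- Weyl dimension (type C): for `l : Fin n → ℕ` (0-indexed; `l i = λ_{i+1} + n - (i+1) + 1`),
with `m_i = n - i` (0-indexed, i.e. `n - i + 1` in the paper's 1-indexing),
`PC n l = (∏_{i<j} (l_i² - l_j²)/(m_i² - m_j²)) · ∏_i l_i / m_i`. -/
def PC (n : ℕ) (l : Fin n → ℕ) : ℚ :=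
  (∏ i : Fin n, ∏ j : Fin n,
    if i < j then
      ((l i : ℚ) ^ 2 - (l j : ℚ) ^ 2) /
        (((n : ℚ) - ((i : ℕ) : ℚ)) ^ 2 - ((n : ℚ) - ((j : ℕ) : ℚ)) ^ 2)
    else 1) *
  ∏ i : Fin n, (l i : ℚ) / ((n : ℚ) - ((i : ℕ) : ℚ))

/-- The pairs `(n, l)` counted by `R_N(Sp)`: rank `n + 1 ≥ 1`, `l` strictly decreasing with all
entries positive, nontrivial (`l 0 ≥ rank + 1`), and dimension `PC l ≤ N`. -/
def SpSet (N : ℕ) : Set (Σ n : ℕ, Fin (n + 1) → ℕ) :=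
  {p | StrictAnti p.2 ∧ (∀ i, 1 ≤ p.2 i) ∧ (p.1 + 1) + 1 ≤ p.2 0 ∧
    PC (p.1 + 1) p.2 ≤ (N : ℚ)}

theorem PC_succ (n : ℕ) (l : Fin (n + 1) → ℕ) :
    PC (n + 1) l = PC n (fun i => l i.succ) * ((l 0 : ℚ) / (n + 1) *
      ∏ j : Fin n, ((l 0 : ℚ) ^ 2 - (l j.succ : ℚ) ^ 2) /
        (((n : ℚ) + 1) ^ 2 - ((n : ℚ) - ((j : ℕ) : ℚ)) ^ 2)) := by
  unfold PC
  rw [Fin.prod_univ_succ, Fin.prod_univ_succ (n := n) (f := fun i : Fin (n+1) => (l i : ℚ) / _),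
    Fin.prod_univ_succ]
  simp only [Fin.prod_univ_succ (n := n), Fin.succ_pos, Fin.not_lt_zero, if_true, if_false, one_mul,
    Fin.succ_lt_succ_iff, Fin.val_succ, Fin.val_zero, lt_irrefl, Nat.cast_add, Nat.cast_one,
    Nat.cast_zero, sub_zero, add_sub_add_right_eq_sub]
  ring

theorem anti_le {n : ℕ} (l : Fin (n + 1) → ℕ) (h : StrictAnti l) (j : Fin (n + 1)) :
    l j + j ≤ l 0 := by
  induction j using Fin.induction with
  | zero => simp
  | succ i ih =>
    have := h (Fin.castSucc_lt_succ (i := i))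
    simp only [Fin.val_castSucc, Fin.val_succ] at *
    omega

theorem anti_ge {n : ℕ} (l : Fin (n + 1) → ℕ) (h : StrictAnti l) (hp : ∀ i, 1 ≤ l i)
    (j : Fin (n + 1)) : n + 1 ≤ l j + j := by
  induction j using Fin.reverseInduction with
  | last => have := hp (Fin.last n); simp; omega
  | cast i ih =>
    have := h (Fin.castSucc_lt_succ (i := i))
    simp only [Fin.val_castSucc, Fin.val_succ] at *
    omega

theorem tail_anti {n : ℕ} (l : Fin (n + 1) → ℕ) (h : StrictAnti l) :
    StrictAnti (fun i : Fin n => l i.succ) :=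
  fun _ _ hab => h (Fin.succ_lt_succ_iff.2 hab)

theorem PC_pos (n : ℕ) (l : Fin n → ℕ) (h : StrictAnti l) (hp : ∀ i, 1 ≤ l i) : 0 < PC n l := by
  induction n with
  | zero => simp [PC]
  | succ n ih =>
    rw [PC_succ]
    refine mul_pos (ih _ (tail_anti l h) (fun i => hp _)) (mul_pos ?_ ?_)
    · have : (0 : ℚ) < l 0 := by exact_mod_cast hp 0
      positivity
    · refine Finset.prod_pos fun j _ => div_pos ?_ ?_
      · have : (l j.succ : ℚ) < l 0 := by exact_mod_cast h (Fin.succ_pos j)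
        have h0 : (0 : ℚ) ≤ l j.succ := by positivity
        nlinarith
      · have : ((j : ℕ) : ℚ) + 1 ≤ n := by exact_mod_cast j.2
        have h0 : (0 : ℚ) ≤ ((j : ℕ) : ℚ) := by positivity
        nlinarith

theorem PC_triv (n : ℕ) (l : Fin n → ℕ) (h : ∀ i, l i + i = n) : PC n l = 1 := by
  have hl : ∀ i, (l i : ℚ) = (n : ℚ) - ((i : ℕ) : ℚ) := by
    intro i
    have : ((l i + i : ℕ) : ℚ) = n := by rw [h i]
    push_cast at this
    linarith
  unfold PC
  have hi : ∀ i : Fin n, ((i : ℕ) : ℚ) < n := fun i => by exact_mod_cast i.2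
  rw [Finset.prod_eq_one, Finset.prod_eq_one, one_mul]
  · intro i _
    rw [hl i]
    have := hi i
    exact div_self (by linarith)
  · intro i _
    refine Finset.prod_eq_one fun j _ => ?_
    split_ifs with hij
    · rw [hl i, hl j]
      apply div_self
      have h1 := hi i
      have h2 := hi j
      have h3 : ((i : ℕ) : ℚ) < ((j : ℕ) : ℚ) := by exact_mod_cast hij
      have : 0 < ((n : ℚ) - ((i : ℕ) : ℚ)) ^ 2 - ((n : ℚ) - ((j : ℕ) : ℚ)) ^ 2 := by nlinarith
      exact this.ne'
    · rfl

/-- lower bound for the row factor -/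
def QQ (n b e : ℕ) : ℚ := ((b : ℚ) + e + 1) / (n + 2) *
  ∏ k ∈ Finset.range (n + 1), (((e : ℚ) + 1 + k) * (2 * b + 1 + e - k)) / ((1 + k) * (2 * n + 3 - k))

theorem PC_ge (n b e : ℕ) (l : Fin (n + 2) → ℕ) (h : StrictAnti l) (hp : ∀ i, 1 ≤ l i)
    (hb : n + 1 ≤ b) (hbl : b ≤ l 1) (he : l 0 = l 1 + e + 1) :
    PC (n + 1) (fun i => l i.succ) * QQ n b e ≤ PC (n + 2) l := by
  rw [PC_succ (n + 1) l]
  refine mul_le_mul_of_nonneg_left ?_ (PC_pos _ _ (tail_anti l h) (fun i => hp _)).le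
  unfold QQ
  have hbQ : (b : ℚ) ≤ l 1 := by exact_mod_cast hbl
  have hnb : (n : ℚ) + 1 ≤ b := by exact_mod_cast hb
  have heQ : (l 0 : ℚ) = l 1 + e + 1 := by exact_mod_cast he
  have he0 : (0 : ℚ) ≤ e := by positivity
  have hn0 : (0 : ℚ) ≤ n := by positivity
  have hb0 : (0 : ℚ) ≤ b := by positivity
  rw [← Fin.prod_univ_eq_prod_range (fun k : ℕ => (((e : ℚ) + 1 + k) * (2 * b + 1 + e - k)) / ((1 + k) * (2 * n + 3 - k)))]
  have hk : ∀ j : Fin (n + 1), ((j : ℕ) : ℚ) ≤ n := fun j => by exact_mod_cast Nat.lt_succ_iff.1 j.2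
  refine mul_le_mul ?_ ?_ ?_ ?_
  · push_cast
    rw [heQ]
    rw [show (n : ℚ) + 1 + 1 = n + 2 by ring]
    gcongr
  · refine Finset.prod_le_prod ?_ ?_
    · intro j _
      have := hk j
      have h0 : (0 : ℚ) ≤ ((j : ℕ) : ℚ) := by positivity
      apply div_nonneg
      · apply mul_nonneg <;> linarith
      · apply mul_nonneg <;> linarith
    · intro j _
      have := hk j
      have h0 : (0 : ℚ) ≤ ((j : ℕ) : ℚ) := by positivity
      have hd : ((((n + 1 : ℕ) : ℚ) + 1) ^ 2 - (((n + 1 : ℕ) : ℚ) - ((j : ℕ) : ℚ)) ^ 2)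
          = (1 + ((j : ℕ) : ℚ)) * (2 * n + 3 - ((j : ℕ) : ℚ)) := by push_cast; ring
      rw [hd]
      have hd0 : 0 < (1 + ((j : ℕ) : ℚ)) * (2 * n + 3 - ((j : ℕ) : ℚ)) := by
        apply mul_pos <;> linarith
      refine div_le_div_of_nonneg_right ?_ hd0.le
      have hlj : l j.succ + j ≤ l 1 := anti_le (fun i : Fin (n + 1) => l i.succ) (tail_anti l h) j
      have hljQ : (l j.succ : ℚ) + ((j : ℕ) : ℚ) ≤ l 1 := by exact_mod_cast hlj
      have hlj0 : (0 : ℚ) ≤ l j.succ := by positivity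
      have h1 : (l j.succ : ℚ) ^ 2 ≤ ((l 1 : ℚ) - ((j : ℕ) : ℚ)) ^ 2 :=
        pow_le_pow_left₀ hlj0 (by linarith) 2
      have h2 : ((e : ℚ) + 1 + ((j : ℕ) : ℚ)) * (2 * b + 1 + e - ((j : ℕ) : ℚ)) ≤
        ((e : ℚ) + 1 + ((j : ℕ) : ℚ)) * (2 * l 1 + 1 + e - ((j : ℕ) : ℚ)) :=
        mul_le_mul_of_nonneg_left (by linarith) (by linarith)
      rw [heQ]
      nlinarith
  · refine Finset.prod_nonneg ?_
    intro j _
    have := hk j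
    have h0 : (0 : ℚ) ≤ ((j : ℕ) : ℚ) := by positivity
    apply div_nonneg
    · apply mul_nonneg <;> linarith
    · apply mul_nonneg <;> linarith
  · positivity

theorem tele_s3 (n K : ℕ) (hK : K ≤ n + 1) :
    ∏ k ∈ Finset.range K, ((2 * (n : ℚ) + 5 - k) / (2 * n + 3 - k)) =
      (2 * n + 5) * (2 * n + 4) / ((2 * n + 5 - K) * (2 * n + 4 - K)) := by
  induction K with
  | zero =>
    have h1 : (2 * (n : ℚ) + 5) * (2 * n + 4) ≠ 0 := by positivity
    simp [div_self h1]
  | succ K ih =>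
    rw [Finset.prod_range_succ, ih (by omega)]
    have hK' : (K : ℚ) ≤ n := by exact_mod_cast (by omega : K ≤ n)
    have hn0 : (0 : ℚ) ≤ n := by positivity
    have h1 : 2 * (n : ℚ) + 5 - K ≠ 0 := by linarith
    have h2 : 2 * (n : ℚ) + 4 - K ≠ 0 := by linarith
    have h3 : 2 * (n : ℚ) + 3 - K ≠ 0 := by linarith
    push_cast
    rw [show 2 * (n : ℚ) + 5 - (K + 1) = 2 * n + 4 - K by ring,
      show 2 * (n : ℚ) + 4 - (K + 1) = 2 * n + 3 - K by ring]
    field_simp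

theorem choose_prod (e m : ℕ) :
    ∏ k ∈ Finset.range m, (((e : ℚ) + 1 + k) / (1 + k)) = ((e + m).choose m : ℚ) := by
  induction m with
  | zero => simp
  | succ m ih =>
    rw [Finset.prod_range_succ, ih]
    have := Nat.add_one_mul_choose_eq (e + m) m
    have h2 : (((e + m + 1) * (e + m).choose m : ℕ) : ℚ) = (((e + m + 1).choose (m + 1) * (m + 1) : ℕ) : ℚ) := by
      rw [this]
    push_cast at h2
    rw [mul_div_assoc', div_eq_iff (by positivity)]
    rw [show e + (m + 1) = e + m + 1 by rfl]
    linarith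

theorem QQ_tail (n e : ℕ) : 5 / 4 * ((e : ℚ) + 1) * (e + 2) ≤ QQ n (n + 2) e := by
  have he0 : (0 : ℚ) ≤ e := by positivity
  rcases n with _ | n
  · simp [QQ]
    rw [div_mul_div_comm, le_div_iff₀ (by norm_num)]
    nlinarith [mul_nonneg he0 he0, mul_nonneg he0 (mul_nonneg he0 he0)]
  · have hn0 : (0 : ℚ) ≤ n := by positivity
    have key : ((n : ℚ) + 4) / (n + 3) * ((∏ k ∈ Finset.range (n + 2), (((e : ℚ) + 1 + k) / (1 + k))) *
        ∏ k ∈ Finset.range (n + 2), ((2 * ((n + 1 : ℕ) : ℚ) + 5 - k) / (2 * ((n + 1 : ℕ) : ℚ) + 3 - k)))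
        ≤ QQ (n + 1) (n + 1 + 2) e := by
      unfold QQ
      rw [← Finset.prod_mul_distrib]
      have hk : ∀ k ∈ Finset.range (n + 2), (k : ℚ) ≤ n + 1 := by
        intro k hk
        have := Finset.mem_range.1 hk
        exact_mod_cast (by omega : k ≤ n + 1)
      have hnn : ∀ k ∈ Finset.range (n + 2), 0 ≤ (((e : ℚ) + 1 + k) / (1 + k)) * ((2 * ((n + 1 : ℕ) : ℚ) + 5 - k) / (2 * ((n + 1 : ℕ) : ℚ) + 3 - k)) := by
        intro k h
        have := hk k h
        push_cast
        apply mul_nonneg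
        · positivity
        · apply div_nonneg <;> linarith
      refine mul_le_mul ?_ ?_ (Finset.prod_nonneg hnn) (by positivity)
      · push_cast
        rw [show (n : ℚ) + 1 + 2 = n + 3 by ring]
        refine div_le_div_of_nonneg_right ?_ (by positivity)
        linarith
      · refine Finset.prod_le_prod hnn ?_
        intro k h
        have := hk k h
        rw [div_mul_div_comm]
        push_cast
        have h0 : (0 : ℚ) ≤ k := by positivity
        refine div_le_div_of_nonneg_right ?_ ?_
        · refine mul_le_mul_of_nonneg_left ?_ ?_ <;> linarith
        · apply mul_nonneg <;> linarith
    refine le_trans ?_ key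
    rw [tele_s3 (n + 1) (n + 2) (by omega)]
    have h2 : ((e : ℚ) + 1) * (e + 2) / 2 ≤ ∏ k ∈ Finset.range (n + 2), (((e : ℚ) + 1 + k) / (1 + k)) := by
      have h3 : ∏ k ∈ Finset.range 2, (((e : ℚ) + 1 + k) / (1 + k)) = ((e : ℚ) + 1) * (e + 2) / 2 := by
        simp [Finset.prod_range_succ]; ring
      rw [← h3]
      rw [show n + 2 = 2 + n by ring, Finset.prod_range_add]
      refine le_mul_of_one_le_right (Finset.prod_nonneg fun k _ => by positivity) ?_
      rw [← Finset.prod_const_one (s := Finset.range n)]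
      refine Finset.prod_le_prod (fun _ _ => zero_le_one) ?_
      intro k _
      rw [one_le_div (by positivity)]
      linarith
    have h4 : (5 / 2 : ℚ) ≤ ((n : ℚ) + 4) / (n + 3) * ((2 * ((n + 1 : ℕ) : ℚ) + 5) * (2 * ((n + 1 : ℕ) : ℚ) + 4) / ((2 * ((n + 1 : ℕ) : ℚ) + 5 - ((n + 2 : ℕ) : ℚ)) * (2 * ((n + 1 : ℕ) : ℚ) + 4 - ((n + 2 : ℕ) : ℚ)))) := by
      push_cast
      rw [show 2 * ((n : ℚ) + 1) + 5 - (n + 2) = n + 5 by ring, show 2 * ((n : ℚ) + 1) + 4 - (n + 2) = n + 4 by ring,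
        div_mul_div_comm, le_div_iff₀ (by positivity)]
      nlinarith [mul_nonneg hn0 hn0, mul_nonneg hn0 (mul_nonneg hn0 hn0)]
    have := mul_le_mul h2 h4 (by norm_num) (Finset.prod_nonneg fun k _ => by positivity)
    linarith

theorem QQ_row (n e : ℕ) : QQ n (n + 1) e = ((e + (2 * n + 3)).choose (2 * n + 3) : ℚ) := by
  rw [← choose_prod, show 2 * n + 3 = (n + 1) + (1 + (n + 1)) by ring, Finset.prod_range_add,
    Finset.prod_range_add (n := 1)]
  have h1 : ∏ x ∈ Finset.range (n + 1), (((e : ℚ) + 1 + ((n + 1 + (1 + x) : ℕ) : ℚ)) / (1 + ((n + 1 + (1 + x) : ℕ) : ℚ)))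
      = ∏ k ∈ Finset.range (n + 1), ((2 * ((n + 1 : ℕ) : ℚ) + 1 + e - k) / (2 * n + 3 - k)) := by
    rw [← Finset.prod_range_reflect _ (n + 1)]
    refine Finset.prod_congr rfl fun k hk => ?_
    have hk' := Finset.mem_range.1 hk
    rw [show n + 1 + (1 + (n + 1 - 1 - k)) = 2 * n + 2 - k by omega,
      Nat.cast_sub (by omega)]
    push_cast
    congr 1 <;> ring
  rw [h1]
  unfold QQ
  simp only [mul_div_mul_comm, Finset.prod_mul_distrib, Finset.prod_range_one]
  push_cast
  rw [show (n : ℚ) + 1 + e + 1 = e + 1 + (n + 1 + 0) by ring, show (n : ℚ) + 2 = 1 + (n + 1 + 0) by ring]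
  ring

theorem choose_ge_self (m e : ℕ) : m + e + 2 ≤ (m + e + 2).choose (m + 1) := by
  induction m with
  | zero => simp
  | succ m ih =>
    rw [show m + 1 + e + 2 = (m + e + 2) + 1 by ring, Nat.choose_succ_succ]
    have : 0 < (m + e + 2).choose (m + 1).succ := Nat.choose_pos (by simp)
    omega

theorem choose_ge_two (m e : ℕ) : (m + e + 4).choose 2 ≤ (m + e + 4).choose (m + 2) := by
  induction m with
  | zero => simp
  | succ m ih =>
    rw [show m + 1 + e + 4 = (m + e + 4) + 1 by ring, Nat.choose_succ_succ _ (m + 2),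
      Nat.choose_succ_succ _ 1]
    have := choose_ge_self (m + 2) e
    rw [Nat.choose_one_right]
    rw [show m + 2 + e + 2 = m + e + 4 by ring] at this
    simp only [Nat.succ_eq_add_one, show 1 + 1 = 2 by rfl, show m + 2 + 1 = m + 3 by rfl] at *
    omega

theorem tsum_bd (s : Finset ℕ) : ∑ e ∈ s, 1 / (((e : ℚ) + 1) * (e + 2)) ≤ 1 := by
  have h1 : ∀ K : ℕ, ∑ e ∈ Finset.range K, 1 / (((e : ℚ) + 1) * (e + 2)) = 1 - 1 / ((K : ℚ) + 1) := by
    intro K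
    induction K with
    | zero => simp
    | succ K ih =>
      rw [Finset.sum_range_succ, ih]
      push_cast
      field_simp
      ring
  obtain ⟨K, hK⟩ := s.exists_nat_subset_range
  refine (Finset.sum_le_sum_of_subset_of_nonneg hK (fun i _ _ => by positivity)).trans ?_
  rw [h1]
  have : (0 : ℚ) ≤ 1 / ((K : ℚ) + 1) := by positivity
  linarith

def GoodT (x : ℚ) (p : Σ n : ℕ, Fin (n + 1) → ℕ) : Prop :=
  StrictAnti p.2 ∧ (∀ i, 1 ≤ p.2 i) ∧ (p.1 + 1) + 1 ≤ p.2 0 ∧ PC (p.1 + 1) p.2 ≤ x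

def sndT : (Σ n : ℕ, Fin (n + 1) → ℕ) → ℕ
  | ⟨0, _⟩ => 0
  | ⟨_ + 1, l⟩ => l 1

def tlT : (Σ n : ℕ, Fin (n + 1) → ℕ) → (Σ n : ℕ, Fin (n + 1) → ℕ)
  | ⟨0, l⟩ => ⟨0, l⟩
  | ⟨n + 1, l⟩ => ⟨n, fun i => l i.succ⟩

theorem ext_T (n : ℕ) (l l' : Fin (n + 1 + 1) → ℕ) (h0 : l 0 = l' 0)
    (h : ∀ i : Fin (n + 1), l i.succ = l' i.succ) : l = l' := by
  funext i
  refine Fin.cases h0 h i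

theorem row_eq (n : ℕ) (l : Fin (n + 2) → ℕ) (h : StrictAnti l) (hp : ∀ i, 1 ≤ l i)
    (h1 : l 1 ≤ n + 1) (i : Fin (n + 1)) : l i.succ + i = n + 1 := by
  have a := anti_le (fun i : Fin (n + 1) => l i.succ) (tail_anti l h) i
  have b := anti_ge (fun i : Fin (n + 1) => l i.succ) (tail_anti l h) (fun i => hp _) i
  have c : l (Fin.succ 0) = l 1 := rfl
  omega

theorem row_PC (n e : ℕ) (l : Fin (n + 2) → ℕ) (h : StrictAnti l) (hp : ∀ i, 1 ≤ l i)
    (h1 : l 1 ≤ n + 1) (he : l 0 = n + 2 + e) :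
    ((e + (2 * n + 3)).choose (2 * n + 3) : ℚ) ≤ PC (n + 2) l := by
  have hr := row_eq n l h hp h1
  have hl1 : l 1 = n + 1 := by simpa using hr 0
  have := PC_ge n (n + 1) e l h hp le_rfl hl1.ge (by omega)
  rwa [PC_triv _ _ hr, one_mul, QQ_row] at this

theorem cardA1 (x : ℚ) (hx : 0 ≤ x) (s : Finset (Σ n : ℕ, Fin (n + 1) → ℕ))
    (hs : ∀ p ∈ s, GoodT x p ∧ p.1 = 0) : (s.card : ℚ) ≤ x := by
  have : s.card ≤ (Finset.Icc 1 ⌊x⌋₊).card := by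
    refine Finset.card_le_card_of_injOn (fun p => p.2 0) ?_ ?_
    · rintro ⟨n, l⟩ hp
      obtain ⟨⟨-, hpos, -, hle⟩, h0⟩ := hs _ hp
      simp only at h0
      subst h0
      simp only [Finset.coe_Icc, Set.mem_Icc]
      refine ⟨hpos 0, Nat.le_floor ?_⟩
      simpa [PC] using hle
    · rintro ⟨n, l⟩ hp ⟨n', l'⟩ hp' heq
      have h0 := (hs _ hp).2
      have h0' := (hs _ hp').2
      simp only at h0 h0' heq
      subst h0 h0'
      congr 1
      funext i
      rw [show i = 0 from Fin.fin_one_eq_zero i]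
      exact heq
  rw [Nat.card_Icc, Nat.add_sub_cancel] at this
  exact (Nat.cast_le.2 this).trans (Nat.floor_le hx)

theorem row_inj (x : ℚ) (p q : Σ n : ℕ, Fin (n + 1) → ℕ) (hp : GoodT x p) (hq : GoodT x q)
    (h1 : p.1 ≠ 0) (h2 : sndT p ≤ p.1) (h2' : sndT q ≤ q.1)
    (hn : p.1 = q.1) (h0 : p.2 0 = q.2 0) : p = q := by
  obtain ⟨n, l⟩ := p
  obtain ⟨n', l'⟩ := q
  simp only at hn
  subst hn
  rcases n with _ | n
  · simp at h1
  · congr 1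
    refine ext_T n _ _ h0 fun i => ?_
    have a := row_eq n l hp.1 hp.2.1 h2 i
    have b := row_eq n l' hq.1 hq.2.1 h2' i
    omega

theorem cardA2 (x : ℚ) (hx : 0 ≤ x) (s : Finset (Σ n : ℕ, Fin (n + 1) → ℕ))
    (hs : ∀ p ∈ s, GoodT x p ∧ p.1 ≠ 0 ∧ sndT p ≤ p.1 ∧ p.2 0 = p.1 + 2) :
    (s.card : ℚ) ≤ x / 2 := by
  have : s.card ≤ (Finset.Icc 1 ⌊x / 2⌋₊).card := by
    refine Finset.card_le_card_of_injOn (fun p => p.1) ?_ ?_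
    · rintro ⟨n, l⟩ hp
      obtain ⟨⟨h, hpos, -, hle⟩, h0, h1, h2⟩ := hs _ hp
      rcases n with _ | n
      · simp at h0
      simp only [Finset.coe_Icc, Set.mem_Icc]
      refine ⟨by omega, Nat.le_floor ?_⟩
      have := row_PC n 1 l h hpos h1 (by simp only at h2; omega)
      rw [show 1 + (2 * n + 3) = (2 * n + 3) + 1 by ring, Nat.choose_succ_self_right] at this
      have := this.trans hle
      push_cast at *
      linarith
    · intro p hp q hq heq
      obtain ⟨g, h0, h1, h2⟩ := hs _ hp
      obtain ⟨g', h0', h1', h2'⟩ := hs _ hq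
      simp only at heq
      exact row_inj x p q g g' h0 h1 h1' heq (by omega)
  rw [Nat.card_Icc, Nat.add_sub_cancel] at this
  exact (Nat.cast_le.2 this).trans (Nat.floor_le (by positivity))

theorem phi_bd (s n : ℕ) (hn : 1 ≤ n) (h : n + 2 ≤ s) :
    (s - 1).choose 2 < s.choose 2 - n ∧ s.choose 2 - n < s.choose 2 := by
  obtain ⟨t, rfl⟩ : ∃ t, s = t + 1 := ⟨s - 1, by omega⟩
  have := Nat.choose_succ_succ t 1
  simp only [Nat.succ_eq_add_one, Nat.choose_one_right, show 1 + 1 = 2 by rfl] at this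
  simp only [Nat.add_sub_cancel]
  omega

theorem phi_inj (s n s' n' : ℕ) (hn : 1 ≤ n) (h : n + 2 ≤ s) (hn' : 1 ≤ n') (h' : n' + 2 ≤ s')
    (heq : s.choose 2 - n = s'.choose 2 - n') : s = s' ∧ n = n' := by
  have a := phi_bd s n hn h
  have b := phi_bd s' n' hn' h'
  have hs : s = s' := by
    rcases lt_trichotomy s s' with hlt | rfl | hlt
    · have := Nat.choose_le_choose 2 (show s ≤ s' - 1 by omega)
      omega
    · rfl
    · have := Nat.choose_le_choose 2 (show s' ≤ s - 1 by omega)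
      omega
  subst hs
  exact ⟨rfl, by omega⟩

theorem cardA3 (x : ℚ) (hx : 0 ≤ x) (s : Finset (Σ n : ℕ, Fin (n + 1) → ℕ))
    (hs : ∀ p ∈ s, GoodT x p ∧ p.1 ≠ 0 ∧ sndT p ≤ p.1 ∧ p.1 + 3 ≤ p.2 0) :
    (s.card : ℚ) ≤ x := by
  have : s.card ≤ (Finset.Icc 1 ⌊x⌋₊).card := by
    refine Finset.card_le_card_of_injOn (fun p => (p.2 0 + p.1).choose 2 - p.1) ?_ ?_
    · rintro ⟨n, l⟩ hp
      obtain ⟨⟨h, hpos, -, hle⟩, h0, h1, h2⟩ := hs _ hp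
      rcases n with _ | n
      · simp at h0
      simp only [Finset.coe_Icc, Set.mem_Icc]
      simp only at h2
      have hb := phi_bd (l 0 + (n + 1)) (n + 1) (by omega) (by omega)
      refine ⟨by omega, hb.2.le.trans (Nat.le_floor ?_)⟩
      obtain ⟨e, he⟩ : ∃ e, l 0 = n + 2 + (e + 2) := ⟨l 0 - (n + 4), by omega⟩
      have := row_PC n (e + 2) l h hpos h1 he
      have h3 := choose_ge_two (2 * n + 1) e
      refine le_trans ?_ (this.trans hle)
      rw [he, show n + 2 + (e + 2) + (n + 1) = 2 * n + 1 + e + 4 by ring,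
        show e + 2 + (2 * n + 3) = 2 * n + 1 + e + 4 by ring]
      exact_mod_cast h3
    · intro p hp q hq heq
      obtain ⟨g, h0, h1, h2⟩ := hs _ hp
      obtain ⟨g', h0', h1', h2'⟩ := hs _ hq
      simp only at heq
      have := phi_inj _ _ _ _ (by omega) (by omega) (by omega) (by omega) heq
      exact row_inj x p q g g' h0 h1 h1' this.2 (by omega)
  rw [Nat.card_Icc, Nat.add_sub_cancel] at this
  exact (Nat.cast_le.2 this).trans (Nat.floor_le hx)

theorem main_T (M : ℕ) : ∀ (x : ℚ), 0 ≤ x → ∀ s : Finset (Σ n : ℕ, Fin (n + 1) → ℕ),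
    (∀ p ∈ s, GoodT x p ∧ p.1 < M) → (s.card : ℚ) ≤ 25 / 2 * x := by
  classical
  induction M with
  | zero =>
    intro x hx s hs
    have : s = ∅ := Finset.eq_empty_of_forall_notMem fun p hp => by simpa using (hs p hp).2
    rw [this]
    simp
    exact hx
  | succ M ih =>
    intro x hx s hs
    set s1 := s.filter (fun p => p.1 = 0) with hs1
    set t1 := s.filter (fun p => ¬ p.1 = 0) with ht1
    set s4 := t1.filter (fun p => ¬ sndT p ≤ p.1) with hs4
    set t2 := t1.filter (fun p => sndT p ≤ p.1) with ht2
    set s2 := t2.filter (fun p => p.2 0 = p.1 + 2) with hs2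
    set s3 := t2.filter (fun p => ¬ p.2 0 = p.1 + 2) with hs3
    have e1 : s1.card + t1.card = s.card := Finset.card_filter_add_card_filter_not _
    have e2 : t2.card + s4.card = t1.card := Finset.card_filter_add_card_filter_not _
    have e3 : s2.card + s3.card = t2.card := Finset.card_filter_add_card_filter_not _
    have c1 : (s1.card : ℚ) ≤ x := cardA1 x hx s1 fun p hp => by
      simp only [hs1, Finset.mem_filter] at hp
      exact ⟨(hs p hp.1).1, hp.2⟩
    have c2 : (s2.card : ℚ) ≤ x / 2 := cardA2 x hx s2 fun p hp => by
      simp only [hs2, ht2, ht1, Finset.mem_filter] at hp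
      exact ⟨(hs p hp.1.1.1).1, hp.1.1.2, hp.1.2, hp.2⟩
    have c3 : (s3.card : ℚ) ≤ x := cardA3 x hx s3 fun p hp => by
      simp only [hs3, ht2, ht1, Finset.mem_filter] at hp
      have g := (hs p hp.1.1.1).1
      have := g.2.2.1
      exact ⟨g, hp.1.1.2, hp.1.2, by omega⟩
    have c4 : (s4.card : ℚ) ≤ 10 * x := by
      have hmem : ∀ p ∈ s4, GoodT x p ∧ p.1 < M + 1 ∧ p.1 ≠ 0 ∧ p.1 < sndT p := by
        intro p hp
        simp only [hs4, ht1, Finset.mem_filter, not_le] at hp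
        exact ⟨(hs p hp.1.1).1, (hs p hp.1.1).2, hp.1.2, hp.2⟩
      set f : (Σ n : ℕ, Fin (n + 1) → ℕ) → ℕ := fun p => p.2 0 - sndT p - 1 with hf
      have hfib : ∀ e ∈ s4.image f, ((s4.filter (fun p => f p = e)).card : ℚ) ≤
          10 * x * (1 / (((e : ℚ) + 1) * (e + 2))) := by
        intro e _
        have hinj : Set.InjOn tlT (s4.filter (fun p => f p = e) : Finset _) := by
          rintro ⟨n, l⟩ hp ⟨n', l'⟩ hq heq
          simp only [Finset.coe_filter, Set.mem_ofPred_eq] at hp hq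
          obtain ⟨hp, hpe⟩ := hp
          obtain ⟨hq, hqe⟩ := hq
          obtain ⟨g, -, h0, -⟩ := hmem _ hp
          obtain ⟨g', -, h0', -⟩ := hmem _ hq
          rcases n with _ | n
          · simp at h0
          rcases n' with _ | n'
          · simp at h0'
          simp only [tlT, Sigma.mk.injEq] at heq
          obtain ⟨rfl, heq⟩ := heq
          have heq := eq_of_heq heq
          have hi : ∀ i : Fin (n + 1), l i.succ = l' i.succ := fun i => congrFun heq i
          congr 1
          refine ext_T n _ _ ?_ hi
          have k1 : l 1 < l 0 := g.1 (by simp)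
          have k2 : l' 1 < l' 0 := g'.1 (by simp)
          have k3 : l 1 = l' 1 := hi 0
          simp only [hf, sndT] at hpe hqe
          omega
        rw [← Finset.card_image_of_injOn hinj]
        have hpos : 0 < 5 / 4 * ((e : ℚ) + 1) * (e + 2) := by positivity
        have := ih (x / (5 / 4 * ((e : ℚ) + 1) * (e + 2))) (by positivity)
          ((s4.filter (fun p => f p = e)).image tlT) ?_
        · refine this.trans (le_of_eq ?_)
          field_simp
          ring
        · intro q hq
          obtain ⟨⟨n, l⟩, hp, rfl⟩ := Finset.mem_image.1 hq
          obtain ⟨hp, hpe⟩ := Finset.mem_filter.1 hp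
          obtain ⟨g, hM, h0, h1⟩ := hmem _ hp
          rcases n with _ | n
          · simp at h0
          simp only [sndT] at h1
          simp only [hf, sndT] at hpe
          have k1 : l 1 < l 0 := g.1 (by simp)
          refine ⟨⟨tail_anti l g.1, fun i => g.2.1 _, ?_, ?_⟩, ?_⟩
          · exact h1
          · rw [le_div_iff₀ hpos]
            have h5 := PC_ge n (n + 2) e l g.1 g.2.1 (by omega) h1 (by omega)
            refine le_trans ?_ (h5.trans g.2.2.2)
            exact mul_le_mul_of_nonneg_left (QQ_tail n e)
              (PC_pos _ _ (tail_anti l g.1) (fun i => g.2.1 _)).le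
          · simp only [tlT]
            simp only at hM
            omega
      rw [Finset.card_eq_sum_card_image f s4]
      push_cast
      refine (Finset.sum_le_sum hfib).trans ?_
      rw [← Finset.mul_sum]
      exact mul_le_of_le_one_right (by positivity) (tsum_bd _)
    have : (s.card : ℚ) = s1.card + (s2.card + s3.card + s4.card) := by
      exact_mod_cast (by omega)
    rw [this]
    linarith

theorem fin_bd (N : ℕ) (s : Finset (Σ n : ℕ, Fin (n + 1) → ℕ)) (hs : (s : Set _) ⊆ SpSet N) :
    s.card ≤ 13 * N := by
  have := main_T (s.sup (fun p => p.1) + 1) N (by positivity) s fun p hp =>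
    ⟨hs hp, Nat.lt_succ_of_le (Finset.le_sup (f := fun p : (Σ n : ℕ, Fin (n + 1) → ℕ) => p.1) hp)⟩
  have h2 : (0 : ℚ) ≤ N := by positivity
  have : (s.card : ℚ) ≤ ((13 * N : ℕ) : ℚ) := by push_cast; linarith
  exact_mod_cast this

/-- `R_N(Sp) ≤ 13 N`. -/
theorem sp_count_le (N : ℕ) (hN : 0 < N) :
    (SpSet N).Finite ∧ (SpSet N).ncard ≤ 13 * N := by
  have hfin : (SpSet N).Finite := by
    by_contra hinf
    obtain ⟨t, ht, hc⟩ := Set.Infinite.exists_subset_card_eq hinf (13 * N + 1)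
    have := fin_bd N t ht
    omega
  refine ⟨hfin, ?_⟩
  rw [Set.ncard_eq_toFinset_card _ hfin]
  exact fin_bd N _ (by simp)
end

section
/- For every positive integer N, R_N(SL) < 43·N; that is, the number of pairs (n, a) with n ≥ 2 and a a nontrivial tuple of n−1 positive integers satisfying P_A(a) ≤ N is less than 43N. -/
/-- Weyl dimension (type A): for a tuple `a : Fin k → ℕ` (0-indexed, corresponding to
`SL_{k+1}(ℂ)`, with `a i = λ_{i+1} + 1`),
`PA k a = ∏_{0 ≤ i < j ≤ k} (a_i + a_{i+1} + ⋯ + a_{j-1}) / (j - i)`. -/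
def PA (k : ℕ) (a : Fin k → ℕ) : ℚ :=
  ∏ i ∈ Finset.range (k + 1), ∏ j ∈ Finset.range (k + 1),
    if i < j then
      ((∑ t ∈ Finset.Ico i j, if h : t < k then (a ⟨t, h⟩ : ℚ) else 0) / ((j : ℚ) - (i : ℚ)))
    else 1

/-- The pairs `(n, a)` counted by `R_N(SL)`: `n = k + 2 ≥ 2`, `a` a tuple of `n - 1 = k + 1`
positive integers, nontrivial (some `a i ≥ 2`), and dimension `PA a ≤ N`. -/
def SLSet (N : ℕ) : Set (Σ k : ℕ, Fin (k + 1) → ℕ) :=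
  {p | (∀ i, 1 ≤ p.2 i) ∧ (∃ i, 2 ≤ p.2 i) ∧ PA (p.1 + 1) p.2 ≤ (N : ℚ)}

open scoped ENNReal

abbrev sn {k : ℕ} (b : Fin k → ℕ) (x : ℕ) : Fin (k+1) → ℕ := Fin.snoc (α := fun _ => ℕ) b x

def ex (k : ℕ) (l : Fin k → ℕ) (i : ℕ) : ℕ := ∑ t : Fin k, if i ≤ (t : ℕ) then l t else 0

lemma ex_sn (k : ℕ) (b : Fin k → ℕ) (x i : ℕ) :
    ex (k+1) (sn b x) i = ex k b i + if i ≤ k then x else 0 := by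
  simp [ex, Fin.sum_univ_castSucc, sn]

lemma ex_top (k : ℕ) (b : Fin k → ℕ) (i : ℕ) (h : k ≤ i) : ex k b i = 0 := by
  unfold ex
  apply Finset.sum_eq_zero
  intro t _
  have := t.2
  rw [if_neg (by omega)]

lemma ex_anti (k : ℕ) (b : Fin k → ℕ) {i j : ℕ} (h : i ≤ j) : ex k b j ≤ ex k b i := by
  unfold ex
  apply Finset.sum_le_sum
  intro t _
  split_ifs <;> omega

noncomputable def fr (k : ℕ) (l : Fin k → ℕ) (x : ℕ) : ℝ :=
  ∏ i ∈ Finset.range (k+1), ((k : ℝ) + 1 - i) / ((k : ℝ) + 1 - i + ex k l i + x)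

lemma sum_ev (k : ℕ) (l : Fin k → ℕ) (i : ℕ) (hi : i ≤ k) :
    (∑ t ∈ Finset.Ico i k, if h : t < k then (((l ⟨t, h⟩ + 1 : ℕ)) : ℚ) else 0)
      = (k : ℚ) - i + ex k l i := by
  have h1 : (∑ t ∈ Finset.Ico i k, if h : t < k then (((l ⟨t, h⟩ + 1 : ℕ)) : ℚ) else 0)
     = ∑ t ∈ Finset.Ico i k, ((1:ℚ) + (if h : t < k then ((l ⟨t, h⟩ : ℕ) : ℚ) else 0)) := by
    apply Finset.sum_congr rfl
    intro t ht
    rw [Finset.mem_Ico] at ht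
    rw [dif_pos ht.2, dif_pos ht.2]
    push_cast; ring
  rw [h1, Finset.sum_add_distrib]
  congr 1
  · simp [Nat.cast_sub hi]
  · have h2 : Finset.Ico i k = (Finset.range k).filter (fun t => i ≤ t) := by
      ext t; simp; omega
    rw [h2, Finset.sum_filter, Finset.sum_range]
    unfold ex
    push_cast
    apply Finset.sum_congr rfl
    intro t _
    simp

lemma PA_sn (k : ℕ) (b : Fin k → ℕ) (x : ℕ) :
    PA (k+1) (fun i => sn b x i + 1) = PA k (fun i => b i + 1) *
      ∏ i ∈ Finset.range (k+1), (((k : ℚ) + 1 - i + ex k b i + x) / ((k : ℚ) + 1 - i)) := by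
  have key : ∀ i ∈ Finset.range (k+1), (∏ j ∈ Finset.range (k + 1 + 1),
    if i < j then
      ((∑ t ∈ Finset.Ico i j, if h : t < k+1 then (((sn b x ⟨t, h⟩ + 1 : ℕ)) : ℚ) else 0) / ((j : ℚ) - (i : ℚ)))
    else 1) = (∏ j ∈ Finset.range (k + 1),
    if i < j then
      ((∑ t ∈ Finset.Ico i j, if h : t < k then (((b ⟨t, h⟩ + 1 : ℕ)) : ℚ) else 0) / ((j : ℚ) - (i : ℚ)))
    else 1) * (((k : ℚ) + 1 - i + ex k b i + x) / ((k : ℚ) + 1 - i)) := by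
    intro i hi
    rw [Finset.mem_range] at hi
    rw [Finset.prod_range_succ]
    congr 1
    · apply Finset.prod_congr rfl
      intro j hj
      rw [Finset.mem_range] at hj
      split_ifs with hij
      · congr 1
        apply Finset.sum_congr rfl
        intro t ht
        rw [Finset.mem_Ico] at ht
        rw [dif_pos (by omega), dif_pos (by omega)]
        have htk : t < k := by omega
        have : (⟨t, by omega⟩ : Fin (k+1)) = Fin.castSucc ⟨t, htk⟩ := rfl
        rw [this, sn, Fin.snoc_castSucc]
      · rfl
    · rw [if_pos hi]
      have := sum_ev (k+1) (sn b x) i (by omega)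
      rw [this, ex_sn, if_pos (by omega)]
      push_cast
      congr 1
      ring
  unfold PA
  rw [Finset.prod_range_succ, Finset.prod_congr rfl key, Finset.prod_mul_distrib]
  rw [Finset.prod_eq_one (s := Finset.range (k+1+1)) (by
    intro j hj
    rw [Finset.mem_range] at hj
    rw [if_neg (by omega)]), mul_one]

noncomputable def w (k : ℕ) (l : Fin k → ℕ) : ℝ≥0∞ :=
  ENNReal.ofReal (1 / ((PA k (fun i => l i + 1) : ℚ) : ℝ))

lemma fr_nonneg (k : ℕ) (l : Fin k → ℕ) (x : ℕ) : 0 ≤ fr k l x := by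
  unfold fr
  apply Finset.prod_nonneg
  intro i hi
  rw [Finset.mem_range] at hi
  have : (i : ℝ) + 1 ≤ k + 1 := by exact_mod_cast hi
  have h0 : 0 ≤ (k : ℝ) + 1 - i := by linarith
  positivity

lemma w_sn (k : ℕ) (b : Fin k → ℕ) (x : ℕ) :
    w (k+1) (sn b x) = w k b * ENNReal.ofReal (fr k b x) := by
  unfold w
  rw [PA_sn, ← ENNReal.ofReal_mul' (fr_nonneg k b x)]
  congr 1
  unfold fr
  push_cast
  rw [one_div, mul_inv, one_div, ← Finset.prod_inv_distrib]
  congr 1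
  apply Finset.prod_congr rfl
  intro i _
  rw [inv_div]

lemma w_zero (l : Fin 0 → ℕ) : w 0 l = 1 := by
  simp [w, PA]

lemma PA_pos (k : ℕ) (l : Fin k → ℕ) : 0 < PA k (fun i => l i + 1) := by
  induction k with
  | zero => simp [PA]
  | succ k ih =>
    have : l = sn (Fin.init l) (l (Fin.last k)) := (Fin.snoc_init_self l).symm
    rw [this, PA_sn]
    apply mul_pos (ih _)
    apply Finset.prod_pos
    intro i hi
    rw [Finset.mem_range] at hi
    have : (i : ℚ) + 1 ≤ k + 1 := by exact_mod_cast hi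
    have h0 : 0 < (k : ℚ) + 1 - i := by linarith
    positivity

lemma tsum_sn (k : ℕ) (F : (Fin (k+1) → ℕ) → ℝ≥0∞) :
    ∑' l, F l = ∑' b, ∑' x, F (sn b x) := by
  rw [← (Fin.snocEquiv (fun _ : Fin (k+1) => ℕ)).tsum_eq, ENNReal.tsum_prod', ENNReal.tsum_comm]
  rfl

open Classical in
noncomputable def W (k : ℕ) (p : (Fin k → ℕ) → Prop) : ℝ≥0∞ := ∑' l, if p l then w k l else 0

lemma W_or (k : ℕ) (p q r : (Fin k → ℕ) → Prop) (h : ∀ l, p l → q l ∨ r l) :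
    W k p ≤ W k q + W k r := by
  classical
  unfold W
  rw [← ENNReal.tsum_add]
  apply ENNReal.tsum_le_tsum
  intro l
  by_cases hp : p l
  · rcases h l hp with h1 | h1
    · simp [hp, h1]
    · simp [hp, h1]
  · simp [hp]

lemma stepA (k : ℕ) (p' : (Fin (k+1) → ℕ) → Prop) (p : (Fin k → ℕ) → Prop) (c : ℝ)
    (h : ∀ b x, p' (sn b x) → x = 0 ∧ p b) (hc : ∀ b, p b → fr k b 0 ≤ c) :
    W (k+1) p' ≤ W k p * ENNReal.ofReal c := by
  classical
  unfold W
  rw [tsum_sn, ← ENNReal.tsum_mul_right]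
  apply ENNReal.tsum_le_tsum
  intro b
  rw [tsum_eq_single 0]
  · split_ifs with h1 h2 h2
    · rw [w_sn]; gcongr; exact hc b h2
    · exact absurd (h _ _ h1).2 h2
    · simp
    · simp
  · intro x hx
    rw [if_neg]
    intro h1
    exact hx (h _ _ h1).1

noncomputable def g (k x : ℕ) : ℝ := ∏ j ∈ Finset.range (k+1), ((j : ℝ) + 1) / ((j : ℝ) + 1 + x)

lemma fr_le_of (k : ℕ) (l : Fin k → ℕ) (x : ℕ) : fr k l x ≤ g k x := by
  unfold fr g
  rw [← Finset.prod_range_reflect (fun j : ℕ => ((j : ℝ) + 1) / ((j : ℝ) + 1 + x))]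
  apply Finset.prod_le_prod
  · intro i hi
    rw [Finset.mem_range] at hi
    have : (i : ℝ) + 1 ≤ k + 1 := by exact_mod_cast hi
    have h0 : 0 ≤ (k : ℝ) + 1 - i := by linarith
    positivity
  · intro i hi
    rw [Finset.mem_range] at hi
    have : (i : ℝ) + 1 ≤ k + 1 := by exact_mod_cast hi
    have h0 : 0 < (k : ℝ) + 1 - i := by linarith
    have h1 : ((k + 1 - 1 - i : ℕ) : ℝ) + 1 = (k : ℝ) + 1 - i := by
      rw [Nat.add_sub_cancel, Nat.cast_sub (by omega)]; ring
    rw [h1]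
    gcongr
    have : (0:ℝ) ≤ ex k l i := by positivity
    linarith

open Classical in
lemma stepB (k : ℕ) (p' : (Fin (k+1) → ℕ) → Prop) (p : (Fin k → ℕ) → Prop) (r : ℕ → Prop) 
    (h : ∀ b x, p' (sn b x) → r x ∧ p b) :
    W (k+1) p' ≤ W k p * ∑' x, if r x then ENNReal.ofReal (g k x) else 0 := by
  unfold W
  rw [tsum_sn, ← ENNReal.tsum_mul_right]
  apply ENNReal.tsum_le_tsum
  intro b
  rw [← ENNReal.tsum_mul_left]
  apply ENNReal.tsum_le_tsum
  intro x
  by_cases h1 : p' (sn b x)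
  · obtain ⟨h2, h3⟩ := h _ _ h1
    simp only [h1, h2, h3, if_true]
    rw [w_sn]
    gcongr
    exact fr_le_of k b x
  · simp [h1]

/-- product bound with excess at least `c` before `m` -/
lemma fr_le1 (k m : ℕ) (l : Fin k → ℕ) (hm : m ≤ k) (h : ∀ i < m, 1 ≤ ex k l i) :
    fr k l 0 ≤ ((k : ℝ) + 2 - m) / (k + 2) := by
  have tel : ∀ m ≤ k, ∏ i ∈ Finset.range m, ((k : ℝ) + 1 - i) / ((k : ℝ) + 2 - i) = ((k : ℝ) + 2 - m) / (k + 2) := by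
    intro m
    induction m with
    | zero => intro _; simp; field_simp
    | succ m ih =>
      intro hm
      rw [Finset.prod_range_succ, ih (by omega)]
      have : (m : ℝ) + 1 ≤ k := by exact_mod_cast hm
      have h0 : 0 < (k : ℝ) + 2 - m := by linarith
      push_cast
      field_simp
      ring
  have hh : fr k l 0 ≤ ∏ i ∈ Finset.range (k+1), (if i < m then ((k : ℝ) + 1 - i) / ((k : ℝ) + 2 - i) else 1) := by
    unfold fr
    apply Finset.prod_le_prod
    · intro i hi
      rw [Finset.mem_range] at hi
      have : (i : ℝ) + 1 ≤ k + 1 := by exact_mod_cast hi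
      have h0 : 0 ≤ (k : ℝ) + 1 - i := by linarith
      positivity
    · intro i hi
      rw [Finset.mem_range] at hi
      have : (i : ℝ) + 1 ≤ k + 1 := by exact_mod_cast hi
      have h0 : 0 < (k : ℝ) + 1 - i := by linarith
      split_ifs with him
      · have h1 : (1:ℝ) ≤ ex k l i := by exact_mod_cast h i him
        have h2 : 0 < (k : ℝ) + 2 - i := by linarith
        gcongr
        push_cast
        linarith
      · have h1 : (0:ℝ) ≤ ex k l i := by positivity
        rw [div_le_one (by positivity)]
        push_cast
        linarith
  refine hh.trans (le_of_eq ?_)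
  rw [← tel m hm, ← Finset.prod_filter]
  congr 1
  ext i; simp; omega

lemma fr_le2 (k : ℕ) (l : Fin k → ℕ) (h : 2 ≤ ex k l 0) :
    fr k l 0 ≤ ((k : ℝ) + 1) / (k + 3) := by
  unfold fr
  rw [Finset.prod_range_succ']
  have h2 : (2:ℝ) ≤ ex k l 0 := by exact_mod_cast h
  have h3 : ∏ i ∈ Finset.range k, (((k : ℝ) + 1 - ((i + 1 : ℕ) : ℝ)) / ((k : ℝ) + 1 - ((i + 1 : ℕ) : ℝ) + ex k l (i+1) + (0:ℕ))) ≤ 1 := by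
    apply Finset.prod_le_one
    · intro i hi
      rw [Finset.mem_range] at hi
      have : (i : ℝ) + 1 ≤ k := by exact_mod_cast hi
      have h0 : 0 ≤ (k : ℝ) + 1 - ((i+1 : ℕ) : ℝ) := by push_cast; linarith
      positivity
    · intro i hi
      rw [Finset.mem_range] at hi
      have : (i : ℝ) + 1 ≤ k := by exact_mod_cast hi
      have h0 : 0 < (k : ℝ) + 1 - ((i+1 : ℕ) : ℝ) := by push_cast; linarith
      rw [div_le_one (by positivity)]
      have h1 : (0:ℝ) ≤ ex k l (i+1) := by positivity
      push_cast at *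
      linarith
  have h4 : ((k : ℝ) + 1 - ((0:ℕ):ℝ)) / ((k : ℝ) + 1 - ((0:ℕ):ℝ) + ex k l 0 + ((0:ℕ):ℝ)) ≤ ((k : ℝ) + 1) / (k + 3) := by
    push_cast
    rw [sub_zero, add_zero]
    apply div_le_div_of_nonneg_left <;> [positivity; positivity; linarith]
  calc _ ≤ 1 * (((k : ℝ) + 1) / (k + 3)) := by
        apply mul_le_mul h3 h4 _ zero_le_one
        simp only [Nat.cast_zero, sub_zero]
        positivity
    _ = _ := one_mul _

lemma tsum_tel (F : ℕ → ℝ≥0∞) (h : ℕ → ℝ) (h0 : ∀ x, 0 ≤ h x) (h1 : ∀ x, h (x+1) ≤ h x)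
    (hF : ∀ x, F x ≤ ENNReal.ofReal (h x - h (x+1))) : ∑' x, F x ≤ ENNReal.ofReal (h 0) := by
  apply ENNReal.tsum_le_of_sum_range_le
  intro n
  calc _ ≤ ∑ i ∈ Finset.range n, ENNReal.ofReal (h i - h (i+1)) := Finset.sum_le_sum (fun i _ => hF i)
    _ = ENNReal.ofReal (∑ i ∈ Finset.range n, (h i - h (i+1))) := by
        rw [ENNReal.ofReal_sum_of_nonneg]
        intro i _; linarith [h1 i]
    _ ≤ _ := by
        rw [Finset.sum_range_sub']
        apply ENNReal.ofReal_le_ofReal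
        linarith [h0 n]

lemma g_pos (k x : ℕ) : 0 < g k x := by
  unfold g
  apply Finset.prod_pos
  intro i _
  positivity

lemma g_rec (k x : ℕ) : g k (x+1) * ((x : ℝ) + k + 2) = g k x * (x + 1) := by
  induction k with
  | zero => simp [g]; field_simp; ring
  | succ k ih =>
    have e : ∀ y, g (k+1) y = g k y * ((((k+1 : ℕ) : ℝ) + 1) / (((k+1:ℕ) : ℝ) + 1 + y)) := by
      intro y; unfold g; rw [Finset.prod_range_succ]
    rw [e, e]
    have e2 : g k (x+1) = g k x * (x + 1) / ((x : ℝ) + k + 2) := by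
      rw [← ih]; field_simp
    rw [e2]
    push_cast
    field_simp
    ring

lemma g_zero (k : ℕ) : g k 0 = 1 := by
  unfold g
  apply Finset.prod_eq_one
  intro i _
  rw [Nat.cast_zero, add_zero, div_self]
  positivity

lemma g_one (k : ℕ) : g k 1 = 1 / ((k : ℝ) + 2) := by
  have := g_rec k 0
  rw [g_zero] at this
  simp at this
  rw [eq_div_iff (by positivity)]
  exact this

lemma g_two (k : ℕ) : g k 2 = 2 / (((k : ℝ) + 2) * (k + 3)) := by
  have := g_rec k 1
  rw [g_one] at this
  rw [eq_div_iff (by positivity)]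
  have e : g k 2 = g k (1+1) := rfl
  rw [e]
  push_cast at this
  have h2 : g k (1 + 1) * (1 + (k:ℝ) + 2) * (k+2) = 1 / ((k:ℝ) + 2) * (1 + 1) * (k+2) := by rw [this]
  rw [show 1 / ((k:ℝ) + 2) * (1 + 1) * (k+2) = 2 by field_simp; norm_num] at h2
  linarith

lemma g_sum (k X : ℕ) (hk : 1 ≤ k) : (∑' x, if X ≤ x then ENNReal.ofReal (g k x) else 0) ≤
    ENNReal.ofReal (g k X * ((X : ℝ) + k + 1) / k) := by
  have hk' : (1:ℝ) ≤ k := by exact_mod_cast hk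
  set H : ℕ → ℝ := fun x => g k x * ((x : ℝ) + k + 1) / k with hH
  have hd : ∀ x, H x - H (x+1) = g k x := by
    intro x
    simp only [hH]
    have := g_rec k x
    push_cast
    rw [div_sub_div_same, div_eq_iff (by positivity)]
    linear_combination -this
  have hp : ∀ x, 0 ≤ H x := fun x => by
    have := (g_pos k x).le
    simp only [hH]; positivity
  have := tsum_tel (fun x => if X ≤ x then ENNReal.ofReal (g k x) else 0) (fun x => H (max x X))
    (fun x => hp _) ?_ ?_
  · simpa using this
  · intro x
    rcases le_or_gt X x with h | h
    · simp only [max_eq_left h, max_eq_left (show X ≤ x+1 by omega)]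
      linarith [hd x, g_pos k x]
    · rw [max_eq_right (by omega), max_eq_right (by omega)]
  · intro x
    rcases le_or_gt X x with h | h
    · simp only [max_eq_left h, max_eq_left (show X ≤ x+1 by omega), h, if_true, hd]
      exact le_rfl
    · rw [if_neg (by omega)]
      exact zero_le

def pT (k : ℕ) (l : Fin k → ℕ) : Prop := ex k l 0 = 0
def pN (k : ℕ) (l : Fin k → ℕ) : Prop := 1 ≤ ex k l 0
def pS (k : ℕ) (l : Fin k → ℕ) : Prop := ex k l 0 = 1 ∧ ex k l 1 = 0
def pD (k : ℕ) (l : Fin k → ℕ) : Prop := 2 ≤ ex k l 0 ∧ ex k l 1 = 0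
def pU (k : ℕ) (l : Fin k → ℕ) : Prop := ex k l 0 = 1 ∧ ex k l (k-1) = 1
def pA (k : ℕ) (l : Fin k → ℕ) : Prop := 2 ≤ ex k l 0 ∧ 1 ≤ ex k l (k-1)
def pB (k : ℕ) (l : Fin k → ℕ) : Prop := 3 ≤ k ∧ ex k l (k-1) = 0 ∧ 1 ≤ ex k l (k-2)
def pC (k : ℕ) (l : Fin k → ℕ) : Prop := ex k l (k-2) = 0 ∧ 1 ≤ ex k l 1
def pE (k : ℕ) (l : Fin k → ℕ) : Prop := pA k l ∨ pB k l ∨ pC k l ∨ pD k l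

lemma cover (k : ℕ) (hk : 2 ≤ k) (l : Fin k → ℕ) (h : pN k l) : pS k l ∨ pU k l ∨ pE k l := by
  unfold pE pS pU pA pB pC pD
  unfold pN at h
  have h1 : ex k l (k-1) ≤ ex k l 0 := ex_anti k l (by omega)
  have h2 : k = 2 → ex k l (k-1) = ex k l 1 := by rintro rfl; rfl
  have h3 : k = 2 → ex k l (k-2) = ex k l 0 := by rintro rfl; rfl
  omega

lemma W_T (k : ℕ) : W k (pT k) ≤ 1 := by
  induction k with
  | zero =>
    unfold W
    rw [tsum_eq_single default]
    · split_ifs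
      · rw [w_zero]
      · exact zero_le
    · intro b hb
      exact absurd (Subsingleton.elim _ _) hb
  | succ k ih =>
    refine (stepA k _ (pT k) 1 ?_ ?_).trans ?_
    · intro b x h
      unfold pT at h ⊢
      rw [ex_sn, if_pos (by omega)] at h
      omega
    · intro b _
      exact (fr_le_of k b 0).trans (g_zero k).le
    · simpa using ih

lemma W_U (k : ℕ) : W (k+1) (pU (k+1)) ≤ ENNReal.ofReal (1 / ((k:ℝ)+2)) := by
  classical
  refine (stepB k _ (pT k) (fun x => x = 1) ?_).trans ?_
  · intro b x h
    unfold pU at h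
    unfold pT
    rw [ex_sn, ex_sn, if_pos (by omega), if_pos (by omega)] at h
    rw [show k + 1 - 1 = k from rfl, ex_top k b k le_rfl] at h
    omega
  · rw [tsum_eq_single 1]
    · rw [if_pos rfl, g_one]
      calc _ ≤ 1 * ENNReal.ofReal (1 / ((k:ℝ)+2)) := by gcongr; exact W_T k
        _ = _ := one_mul _
    · intro x hx
      rw [if_neg hx]

lemma W_S (k : ℕ) : W (k+1) (pS (k+1)) ≤ ENNReal.ofReal (1 / ((k:ℝ)+2)) := by
  induction k with
  | zero =>
    convert W_U 0 using 2
    ext l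
    unfold pS pU
    rw [ex_top 1 l 1 le_rfl]
    simp
  | succ k ih =>
    refine (stepA (k+1) _ (pS (k+1)) (((k:ℝ)+2)/(k+3)) ?_ ?_).trans ?_
    · intro b x h
      unfold pS at h ⊢
      rw [ex_sn, ex_sn, if_pos (by omega), if_pos (by omega)] at h
      omega
    · intro b hb
      have := fr_le1 (k+1) 1 b (by omega) (by
        intro i hi
        have : i = 0 := by omega
        subst this
        exact hb.1.ge)
      refine this.trans (le_of_eq ?_)
      push_cast
      congr 1 <;> ring
    · calc _ ≤ ENNReal.ofReal (1 / ((k:ℝ)+2)) * ENNReal.ofReal (((k:ℝ)+2)/(k+3)) := by gcongr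
        _ = _ := by
          rw [← ENNReal.ofReal_mul (by positivity)]
          congr 1
          push_cast
          field_simp
          ring

lemma W_D (k : ℕ) (hk : 1 ≤ k) : W (k+1) (pD (k+1)) ≤ W k (pD k) * ENNReal.ofReal (((k:ℝ)+1)/(k+3)) := by
  apply stepA
  · intro b x h
    unfold pD at h ⊢
    rw [ex_sn, ex_sn, if_pos (by omega), if_pos (by omega)] at h
    omega
  · intro b hb
    exact fr_le2 k b hb.1

lemma W_B (k : ℕ) (hk : 2 ≤ k) : W (k+1) (pB (k+1)) ≤
    (W k (pA k) + W k (pU k)) * ENNReal.ofReal (2/((k:ℝ)+2)) := by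
  refine (stepA k _ (fun l => pA k l ∨ pU k l) (2/((k:ℝ)+2)) ?_ ?_).trans ?_
  · intro b x h
    unfold pB at h
    unfold pA pU
    rw [ex_sn, ex_sn, if_pos (by omega), if_pos (by omega)] at h
    rw [show k + 1 - 1 = k from rfl, show k + 1 - 2 = k - 1 from rfl, ex_top k b k le_rfl] at h
    have := ex_anti k b (show 0 ≤ k - 1 by omega)
    omega
  · intro b hb
    have hb' : 1 ≤ ex k b (k-1) := by
      rcases hb with h | h
      · exact h.2
      · exact h.2.ge
    have := fr_le1 k k b le_rfl (by
      intro i hi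
      exact hb'.trans (ex_anti k b (by omega)))
    refine this.trans (le_of_eq ?_)
    congr 1; ring
  · gcongr
    exact W_or _ _ _ _ (fun l h => h)

lemma W_C (k : ℕ) (hk : 2 ≤ k) : W (k+1) (pC (k+1)) ≤
    W k (pB k) * ENNReal.ofReal (3/((k:ℝ)+2)) + W k (pC k) * ENNReal.ofReal ((k:ℝ)/((k:ℝ)+2)) := by
  refine (W_or _ _ (fun l => pC (k+1) l ∧ 1 ≤ ex (k+1) l (k-2) ∧ 3 ≤ k)
    (fun l => pC (k+1) l ∧ ¬ (1 ≤ ex (k+1) l (k-2) ∧ 3 ≤ k)) (fun l h => by tauto)).trans ?_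
  apply add_le_add
  · apply stepA
    · intro b x h
      unfold pC at h
      unfold pB
      rw [ex_sn, ex_sn, ex_sn, if_pos (by omega), if_pos (by omega), if_pos (by omega)] at h
      rw [show k + 1 - 2 = k - 1 from rfl] at h
      omega
    · intro b hb
      have := fr_le1 k (k-1) b (by omega) (by
        intro i hi
        exact hb.2.2.trans (ex_anti k b (by omega)))
      refine this.trans (le_of_eq ?_)
      rw [Nat.cast_sub (by omega)]
      congr 1; push_cast; ring
  · apply stepA
    · intro b x h
      unfold pC at h ⊢
      rw [ex_sn, ex_sn, ex_sn, if_pos (by omega), if_pos (by omega), if_pos (by omega)] at h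
      rw [show k + 1 - 2 = k - 1 from rfl] at h
      have h2 : k = 2 → ex k b (k-1) = ex k b 1 := by rintro rfl; rfl
      omega
    · intro b hb
      have := fr_le1 k 2 b hk (by
        intro i hi
        exact hb.2.trans (ex_anti k b (by omega)))
      refine this.trans (le_of_eq ?_)
      congr 1; push_cast; ring

lemma W_A (k : ℕ) (hk : 1 ≤ k) : W (k+1) (pA (k+1)) ≤
    ENNReal.ofReal (2/((k:ℝ)*(k+2))) + W k (pN k) * ENNReal.ofReal (1/(k:ℝ)) := by
  classical
  have hk' : (1:ℝ) ≤ k := by exact_mod_cast hk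
  refine (W_or _ _ (fun l => pA (k+1) l ∧ ex (k+1) l 0 = ex (k+1) l k)
    (fun l => pA (k+1) l ∧ ¬ (ex (k+1) l 0 = ex (k+1) l k)) (fun l h => by tauto)).trans ?_
  apply add_le_add
  · refine (stepB k _ (pT k) (fun x => 2 ≤ x) ?_).trans ?_
    · intro b x h
      unfold pA at h
      unfold pT
      rw [show k + 1 - 1 = k from rfl, ex_sn, ex_sn, if_pos (by omega), if_pos (by omega), ex_top k b k le_rfl] at h
      omega
    · calc _ ≤ 1 * ENNReal.ofReal (g k 2 * (((2:ℕ) : ℝ) + k + 1) / k) := by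
            gcongr
            · exact W_T k
            · refine le_trans (ENNReal.tsum_le_tsum fun x => ?_) (g_sum k 2 hk)
              by_cases hx : 2 ≤ x <;> simp [hx]
        _ = _ := by
          rw [one_mul, g_two]
          congr 1
          push_cast
          field_simp
          ring
  · refine (stepB k _ (pN k) (fun x => 1 ≤ x) ?_).trans ?_
    · intro b x h
      unfold pA at h
      unfold pN
      rw [show k + 1 - 1 = k from rfl, ex_sn, ex_sn, if_pos (by omega), if_pos (by omega), ex_top k b k le_rfl] at h
      omega
    · gcongr
      calc _ ≤ ENNReal.ofReal (g k 1 * (((1:ℕ) : ℝ) + k + 1) / k) := by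
            refine le_trans (ENNReal.tsum_le_tsum fun x => ?_) (g_sum k 1 hk)
            by_cases hx : 1 ≤ x <;> simp [hx]
        _ = _ := by
          rw [g_one]
          congr 1
          push_cast
          field_simp
          ring

lemma w_two (x y : ℕ) : w 2 (sn (sn (fun i : Fin 0 => i.elim0) x) y) =
    ENNReal.ofReal (2 / (((x:ℝ)+1) * (y+1) * (x+y+2))) := by
  rw [w_sn, w_sn, w_zero, one_mul, ← ENNReal.ofReal_mul (fr_nonneg _ _ _)]
  congr 1
  simp only [fr, Finset.prod_range_succ, Finset.prod_range_zero, ex_sn]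
  simp [ex]
  field_simp
  ring

open Classical in
lemma W_two (p : (Fin 2 → ℕ) → Prop) (q : ℕ → ℕ → Prop)
    (h : ∀ x y, p (sn (sn (fun i : Fin 0 => i.elim0) x) y) → q x y) :
    W 2 p ≤ ∑' y : ℕ, ∑' x : ℕ, if q x y then ENNReal.ofReal (2 / (((x:ℝ)+1) * (y+1) * (x+y+2))) else 0 := by
  unfold W
  rw [tsum_sn, tsum_sn, tsum_eq_single (fun i : Fin 0 => i.elim0), ENNReal.tsum_comm]
  · apply ENNReal.tsum_le_tsum
    intro y
    apply ENNReal.tsum_le_tsum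
    intro x
    by_cases h1 : p (sn (sn (fun i : Fin 0 => i.elim0) x) y)
    · rw [if_pos h1, if_pos (h x y h1), w_two]
    · rw [if_neg h1]; exact zero_le
  · intro b hb
    exact absurd (Subsingleton.elim _ _) hb

lemma W_D2 : W 2 (pD 2) ≤ ENNReal.ofReal (2/3) := by
  classical
  refine (W_two _ (fun x y => y = 0 ∧ 2 ≤ x) ?_).trans ?_
  · intro x y h
    unfold pD at h
    simp only [ex_sn] at h
    simp [ex] at h
    omega
  · rw [tsum_eq_single 0]
    · refine (tsum_tel _ (fun x => 2 / (((max x 2 : ℕ) : ℝ) + 1)) ?_ ?_ ?_).trans ?_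
      · intro x; positivity
      · intro x
        gcongr
        omega
      · intro x
        by_cases hx : 2 ≤ x
        · rw [if_pos ⟨rfl, hx⟩]
          apply ENNReal.ofReal_le_ofReal
          rw [max_eq_left hx, max_eq_left (by omega)]
          push_cast
          apply le_of_eq
          field_simp
          ring
        · rw [if_neg (by tauto)]; exact zero_le
      · norm_num
    · intro y hy
      simp [hy]

noncomputable def Hm (x b : ℕ) : ℝ := ∑ j ∈ Finset.range b, 1 / ((x:ℝ) + 1 + j)

lemma Hm_nonneg (x b : ℕ) : 0 ≤ Hm x b := by
  unfold Hm
  apply Finset.sum_nonneg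
  intro i _
  positivity

lemma Hm_sub (x b : ℕ) : Hm x b - Hm (x+1) b = 1 / ((x:ℝ)+1) - 1 / ((x:ℝ)+1+b) := by
  unfold Hm
  induction b with
  | zero => simp
  | succ b ih =>
    rw [Finset.sum_range_succ, Finset.sum_range_succ]
    have e : (((x+1:ℕ)):ℝ) + 1 + b = (x:ℝ) + 1 + ((b+1:ℕ):ℝ) := by push_cast; ring
    rw [e]
    linarith

lemma innr_sum (y : ℕ) : (∑' x : ℕ, ENNReal.ofReal (2 / (((x:ℝ)+1) * (y+1) * (x+y+2)))) ≤
    ENNReal.ofReal (2 * Hm 0 (y+1) / ((y:ℝ)+1)^2) := by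
  have hd : ∀ x : ℕ, 2 * Hm x (y+1) / ((y:ℝ)+1)^2 - 2 * Hm (x+1) (y+1) / ((y:ℝ)+1)^2 =
      2 / (((x:ℝ)+1) * (y+1) * (x+y+2)) := by
    intro x
    have := Hm_sub x (y+1)
    rw [← sub_div, ← mul_sub, this]
    push_cast
    have e : (x:ℝ) + 1 + (y + 1) ≠ 0 := by positivity
    field_simp
    ring
  refine tsum_tel _ (fun x => 2 * Hm x (y+1) / ((y:ℝ)+1)^2) ?_ ?_ ?_
  · intro x
    have := Hm_nonneg x (y+1)
    positivity
  · intro x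
    have : 0 ≤ 2 / (((x:ℝ)+1) * (y+1) * (x+y+2)) := by positivity
    have := hd x
    linarith
  · intro x
    rw [hd]

lemma W_A2 : W 2 (pA 2) ≤ ENNReal.ofReal (13/4) := by
  classical
  refine (W_two _ (fun x y => 1 ≤ y) ?_).trans ?_
  · intro x y h
    unfold pA at h
    simp only [ex_sn] at h
    simp [ex] at h
    omega
  · set G : ℕ → ℝ := fun y => if y ≤ 1 then 13/4 else 2 * (Hm 0 y + 1) / y with hG
    have hs : ∀ y, Hm 0 (y+1) = Hm 0 y + 1 / ((y:ℝ)+1) := by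
      intro y
      unfold Hm
      rw [Finset.sum_range_succ]
      simp [add_comm]
    have h2 : Hm 0 2 = 3/2 := by simp [Hm, Finset.sum_range_succ]; norm_num
    have hd : ∀ y, 1 ≤ y → 2 * Hm 0 (y+1) / ((y:ℝ)+1)^2 ≤ G y - G (y+1) := by
      intro y hy
      simp only [hG]
      rw [if_neg (show ¬ (y + 1 ≤ 1) by omega)]
      rcases eq_or_lt_of_le hy with h | h
      · subst h
        simp only [Nat.reduceAdd, h2]
        norm_num
      · rw [if_neg (by omega)]
        have hy' : (1:ℝ) ≤ y := by exact_mod_cast hy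
        have e : 2 * (Hm 0 y + 1) / (y:ℝ) - 2 * (Hm 0 (y+1) + 1) / ((y+1:ℕ):ℝ) = 2 * Hm 0 (y+1) / ((y:ℝ) * (y+1)) := by
          rw [hs]
          push_cast
          field_simp
          ring
        rw [e]
        have := Hm_nonneg 0 (y+1)
        apply div_le_div_of_nonneg_left
        · positivity
        · positivity
        · nlinarith
    refine (tsum_tel _ G ?_ ?_ ?_).trans ?_
    · intro y
      simp only [hG]
      have := Hm_nonneg 0 y
      split_ifs <;> positivity
    · intro y
      by_cases hy : 1 ≤ y
      · have := hd y hy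
        have h3 : 0 ≤ 2 * Hm 0 (y+1) / ((y:ℝ)+1)^2 := by
          have := Hm_nonneg 0 (y+1)
          positivity
        linarith
      · have : y = 0 := by omega
        subst this
        simp [hG]
    · intro y
      by_cases hy : 1 ≤ y
      · simp only [hy, if_true]
        exact (innr_sum y).trans (ENNReal.ofReal_le_ofReal (hd y hy))
      · simp [hy]
    · simp [hG]

lemma W_B2 : W 2 (pB 2) = 0 := by
  simp [W, pB]

lemma W_C2 : W 2 (pC 2) = 0 := by
  unfold W
  rw [ENNReal.tsum_eq_zero]
  intro l
  rw [if_neg]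
  rintro ⟨h1, h2⟩
  have := ex_anti 2 l (show 0 ≤ 1 by omega)
  simp only [Nat.sub_self] at h1
  omega

/-- bounding sequences, index `j` stands for `k = j + 2` -/
noncomputable def st : ℕ → ℝ × ℝ × ℝ × ℝ
  | 0 => (13/4, 0, 0, 2/3)
  | j+1 =>
    (2/(((j:ℝ)+2)*(j+4)) + (2/((j:ℝ)+3) + (st j).1 + (st j).2.1 + (st j).2.2.1 + (st j).2.2.2) * (1/((j:ℝ)+2)),
     ((st j).1 + 1/((j:ℝ)+3)) * (2/((j:ℝ)+4)),
     (st j).2.1 * (3/((j:ℝ)+4)) + (st j).2.2.1 * (((j:ℝ)+2)/(j+4)),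
     (st j).2.2.2 * (((j:ℝ)+3)/(j+5)))

lemma st_nonneg (j : ℕ) : 0 ≤ (st j).1 ∧ 0 ≤ (st j).2.1 ∧ 0 ≤ (st j).2.2.1 ∧ 0 ≤ (st j).2.2.2 := by
  induction j with
  | zero => norm_num [st]
  | succ j ih =>
    obtain ⟨h1, h2, h3, h4⟩ := ih
    simp only [st]
    refine ⟨?_, ?_, ?_, ?_⟩ <;> positivity

lemma W_E (k : ℕ) : W k (pE k) ≤ W k (pA k) + W k (pB k) + W k (pC k) + W k (pD k) := by
  refine (W_or k _ (pA k) (fun l => pB k l ∨ pC k l ∨ pD k l) (fun l h => h)).trans ?_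
  rw [add_assoc, add_assoc]
  gcongr
  refine (W_or k _ (pB k) (fun l => pC k l ∨ pD k l) (fun l h => h)).trans ?_
  gcongr
  exact (W_or k _ (pC k) (pD k) (fun l h => h))

lemma W_N (k : ℕ) (hk : 2 ≤ k) : W k (pN k) ≤ W k (pS k) + (W k (pU k) + W k (pE k)) := by
  refine (W_or k _ (pS k) (fun l => pU k l ∨ pE k l) (fun l h => cover k hk l h)).trans ?_
  gcongr
  exact (W_or k _ _ _ (fun l h => h))

lemma W_le_st (j : ℕ) : W (j+2) (pA (j+2)) ≤ ENNReal.ofReal (st j).1 ∧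
    W (j+2) (pB (j+2)) ≤ ENNReal.ofReal (st j).2.1 ∧
    W (j+2) (pC (j+2)) ≤ ENNReal.ofReal (st j).2.2.1 ∧
    W (j+2) (pD (j+2)) ≤ ENNReal.ofReal (st j).2.2.2 := by
  induction j with
  | zero =>
    refine ⟨W_A2, ?_, ?_, W_D2⟩
    · simp [W_B2]
    · simp [W_C2]
  | succ j ih =>
    obtain ⟨h1, h2, h3, h4⟩ := ih
    obtain ⟨n1, n2, n3, n4⟩ := st_nonneg j
    have hU : W (j+2) (pU (j+2)) ≤ ENNReal.ofReal (1/((j:ℝ)+3)) := by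
      refine (W_U (j+1)).trans (le_of_eq ?_)
      congr 2; push_cast; ring
    have hS : W (j+2) (pS (j+2)) ≤ ENNReal.ofReal (1/((j:ℝ)+3)) := by
      refine (W_S (j+1)).trans (le_of_eq ?_)
      congr 2; push_cast; ring
    have e4 : ((j+2:ℕ):ℝ) + 2 = (j:ℝ)+4 := by push_cast; ring
    have e5 : ((j+2:ℕ):ℝ) + 3 = (j:ℝ)+5 := by push_cast; ring
    have e3 : ((j+2:ℕ):ℝ) + 1 = (j:ℝ)+3 := by push_cast; ring
    have e2 : ((j+2:ℕ):ℝ) = (j:ℝ)+2 := by push_cast; ring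
    simp only [st]
    refine ⟨?_, ?_, ?_, ?_⟩
    · refine (W_A (j+2) (by omega)).trans ?_
      rw [e4, e2, ENNReal.ofReal_add (by positivity) (by positivity), ENNReal.ofReal_mul (by positivity)]
      gcongr
      refine (W_N (j+2) (by omega)).trans ?_
      have hE := W_E (j+2)
      calc _ ≤ ENNReal.ofReal (1/((j:ℝ)+3)) + (ENNReal.ofReal (1/((j:ℝ)+3)) + 
            (ENNReal.ofReal (st j).1 + ENNReal.ofReal (st j).2.1 + ENNReal.ofReal (st j).2.2.1 + ENNReal.ofReal (st j).2.2.2)) := by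
              gcongr
              refine hE.trans ?_
              gcongr
        _ = _ := by
          rw [← ENNReal.ofReal_add (by positivity) (by positivity), ← ENNReal.ofReal_add (by positivity) (by positivity),
            ← ENNReal.ofReal_add (by positivity) (by positivity), ← ENNReal.ofReal_add (by positivity) (by positivity),
            ← ENNReal.ofReal_add (by positivity) (by positivity)]
          congr 1
          ring
    · refine (W_B (j+2) (by omega)).trans ?_
      rw [e4, ENNReal.ofReal_mul (by positivity), ENNReal.ofReal_add (by positivity) (by positivity)]
      gcongr
    · refine (W_C (j+2) (by omega)).trans ?_
      rw [e4, e2, ENNReal.ofReal_add (by positivity) (by positivity), ENNReal.ofReal_mul (by positivity), ENNReal.ofReal_mul (by positivity)]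
      gcongr
    · refine (W_D (j+2) (by omega)).trans ?_
      rw [e5, e3, ENNReal.ofReal_mul (by positivity)]
      gcongr

noncomputable def Es (j : ℕ) : ℝ := (st j).1 + (st j).2.1 + (st j).2.2.1 + (st j).2.2.2

/-- potential function -/
noncomputable def V (j : ℕ) : ℝ := 3 * (st j).1 + 21/4 * (st j).2.1 + ((j:ℝ)+5) * (st j).2.2.1
  + ((j:ℝ)+7) * (st j).2.2.2 + 45/2/((j:ℝ)+2)

lemma V_step (j : ℕ) (hj : 4 ≤ j) : Es j + V (j+1) ≤ V j := by
  have hj' : (4:ℝ) ≤ j := by exact_mod_cast hj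
  obtain ⟨n1, n2, n3, n4⟩ := st_nonneg j
  unfold Es V
  simp only [st]
  generalize (st j).1 = a at *
  generalize (st j).2.1 = b at *
  generalize (st j).2.2.1 = c at *
  generalize (st j).2.2.2 = d at *
  push_cast
  generalize (j:ℝ) = t at *
  have ca : 0 ≤ 3 - (1 + 21/4*(2/(t+4)) + 3 * (1/(t+2))) := by
    have h1 : 2/(t+4) ≤ 1/4 := by rw [div_le_div_iff₀] <;> linarith
    have h2 : 1/(t+2) ≤ 1/6 := by rw [div_le_div_iff₀] <;> linarith
    linarith
  have cb : 0 ≤ 21/4 - (1 + (t+1+5)*(3/(t+4)) + 3 * (1/(t+2))) := by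
    have h1 : (t+1+5)*(3/(t+4)) ≤ 15/4 := by rw [mul_div_assoc', div_le_div_iff₀] <;> linarith
    have h2 : 1/(t+2) ≤ 1/6 := by rw [div_le_div_iff₀] <;> linarith
    linarith
  have cc : 0 ≤ (t+5) - (1 + (t+1+5)*((t+2)/(t+4)) + 3 * (1/(t+2))) := by
    have e : (t+5) - (1 + (t+1+5)*((t+2)/(t+4)) + 3 * (1/(t+2))) = (t - 4)/((t+4)*(t+2)) := by
      field_simp; ring
    rw [e]
    apply div_nonneg <;> nlinarith
  have cd : 0 ≤ (t+7) - (1 + (t+1+7)*((t+3)/(t+5)) + 3 * (1/(t+2))) := by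
    have e : (t+7) - (1 + (t+1+7)*((t+3)/(t+5)) + 3 * (1/(t+2))) = (3*t - 3)/((t+5)*(t+2)) := by
      field_simp; ring
    rw [e]
    apply div_nonneg <;> nlinarith
  have cs : 0 ≤ 45/2/(t+2) - (45/2/(t+1+2) + 3 * (2/((t+2)*(t+4)) + 2/(t+3)*(1/(t+2))) + 21/4 * (1/(t+3)*(2/(t+4)))) := by
    have e : 45/2/(t+2) - (45/2/(t+1+2) + 3 * (2/((t+2)*(t+4)) + 2/(t+3)*(1/(t+2))) + 21/4 * (1/(t+3)*(2/(t+4)))) = 27/((t+2)*(t+3)*(t+4)) := by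
      field_simp; ring
    rw [e]
    positivity
  have := mul_nonneg ca n1
  have := mul_nonneg cb n2
  have := mul_nonneg cc n3
  have := mul_nonneg cd n4
  linarith

lemma Es_sum (J : ℕ) : ∑ j ∈ Finset.range (J+4), Es j + V (J+4) ≤ 40 := by
  induction J with
  | zero =>
    simp only [Finset.sum_range_succ, Finset.sum_range_zero, Es, V, st]
    norm_num
  | succ J ih =>
    have := V_step (J+4) (by omega)
    rw [show J + 1 + 4 = J + 4 + 1 from rfl, Finset.sum_range_succ]
    linarith

lemma tsum_E : ∑' j, W (j+2) (pE (j+2)) ≤ ENNReal.ofReal 40 := by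
  have hE : ∀ j, 0 ≤ Es j := fun j => by
    obtain ⟨n1, n2, n3, n4⟩ := st_nonneg j
    unfold Es; positivity
  have hb : ∀ j, W (j+2) (pE (j+2)) ≤ ENNReal.ofReal (Es j) := fun j => by
    obtain ⟨n1, n2, n3, n4⟩ := st_nonneg j
    obtain ⟨h1, h2, h3, h4⟩ := W_le_st j
    refine (W_E _).trans ?_
    unfold Es
    rw [ENNReal.ofReal_add (by positivity) (by positivity), ENNReal.ofReal_add (by positivity) (by positivity),
      ENNReal.ofReal_add (by positivity) (by positivity)]
    gcongr
  apply ENNReal.tsum_le_of_sum_range_le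
  intro n
  calc _ ≤ ∑ i ∈ Finset.range n, ENNReal.ofReal (Es i) := Finset.sum_le_sum (fun i _ => hb i)
    _ = ENNReal.ofReal (∑ i ∈ Finset.range n, Es i) := by
        rw [ENNReal.ofReal_sum_of_nonneg]
        intro i _; exact hE i
    _ ≤ _ := by
        apply ENNReal.ofReal_le_ofReal
        have h1 := Es_sum n
        have h2 : 0 ≤ V (n+4) := by
          obtain ⟨n1, n2, n3, n4⟩ := st_nonneg (n+4)
          unfold V; positivity
        have h3 : ∑ i ∈ Finset.range n, Es i ≤ ∑ i ∈ Finset.range (n+4), Es i :=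
          Finset.sum_le_sum_of_subset_of_nonneg (by simp) (fun i _ _ => hE i)
        linarith

lemma ex_step (k : ℕ) (l : Fin k → ℕ) (i : Fin k) : ex k l i = ex k l (i+1) + l i := by
  unfold ex
  have : l i = ∑ t : Fin k, if t = i then l t else 0 := by simp
  rw [this, ← Finset.sum_add_distrib]
  apply Finset.sum_congr rfl
  intro t _
  by_cases h : t = i
  · subst h; simp
  · have : (t:ℕ) ≠ i := fun h' => h (Fin.ext h')
    simp only [h, if_false, add_zero]
    split_ifs <;> omega

lemma ex_inj (k : ℕ) (l l' : Fin k → ℕ) (h : ∀ i, ex k l i = ex k l' i) : l = l' := by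
  ext i
  have h1 := ex_step k l i
  have h2 := ex_step k l' i
  rw [h, h] at h1
  omega

lemma pS_inj (k : ℕ) (l l' : Fin k → ℕ) (h : pS k l) (h' : pS k l') : l = l' := by
  apply ex_inj
  intro i
  rcases Nat.eq_zero_or_pos i with rfl | hi
  · rw [h.1, h'.1]
  · have h1 := ex_anti k l hi
    have h2 := ex_anti k l' hi
    have := h.2
    have := h'.2
    simp at h1 h2
    omega

lemma pU_inj (k : ℕ) (l l' : Fin k → ℕ) (h : pU k l) (h' : pU k l') : l = l' := by
  apply ex_inj
  intro i
  rcases le_or_gt k i with hi | hi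
  · rw [ex_top k l i hi, ex_top k l' i hi]
  · have h1 := ex_anti k l (show i ≤ k - 1 by omega)
    have h2 := ex_anti k l' (show i ≤ k - 1 by omega)
    have h3 := ex_anti k l (Nat.zero_le i)
    have h4 := ex_anti k l' (Nat.zero_le i)
    obtain ⟨a1, a2⟩ := h
    obtain ⟨b1, b2⟩ := h'
    omega

lemma w_le_W (k : ℕ) (p : (Fin k → ℕ) → Prop) (l : Fin k → ℕ) (h : p l) : w k l ≤ W k p := by
  classical
  unfold W
  refine le_trans ?_ (ENNReal.le_tsum l)
  rw [if_pos h]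

lemma PA_ge (k : ℕ) (p : (Fin k → ℕ) → Prop) (l : Fin k → ℕ) (h : p l) (n N : ℕ) (hn : 0 < n)
    (hW : W k p ≤ ENNReal.ofReal (1/(n:ℝ))) (hN : PA k (fun i => l i + 1) ≤ (N:ℚ)) : n ≤ N := by
  have h1 := (w_le_W k p l h).trans hW
  unfold w at h1
  have hn' : (0:ℝ) < n := by exact_mod_cast hn
  rw [ENNReal.ofReal_le_ofReal_iff (by positivity)] at h1
  have hp : (0:ℝ) < ((PA k (fun i => l i + 1) : ℚ) : ℝ) := by exact_mod_cast PA_pos k l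
  rw [one_div_le_one_div hp hn'] at h1
  have h2 : ((PA k (fun i => l i + 1) : ℚ) : ℝ) ≤ N := by exact_mod_cast hN
  exact_mod_cast h1.trans h2

/-- shifted data -/
def sh (p : Σ k : ℕ, Fin (k + 1) → ℕ) : Fin (p.1 + 1) → ℕ := fun i => p.2 i - 1

lemma sh_add (N : ℕ) (p : Σ k : ℕ, Fin (k + 1) → ℕ) (hp : p ∈ SLSet N) :
    (fun i => sh p i + 1) = p.2 := by
  ext i
  have := hp.1 i
  unfold sh
  omega

lemma sh_pN (N : ℕ) (p : Σ k : ℕ, Fin (k + 1) → ℕ) (hp : p ∈ SLSet N) : pN (p.1+1) (sh p) := by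
  obtain ⟨i, hi⟩ := hp.2.1
  unfold pN
  have h1 := ex_step _ (sh p) i
  have h2 := ex_anti (p.1+1) (sh p) (Nat.zero_le i)
  have h3 : sh p i = p.2 i - 1 := rfl
  omega

lemma PA_one (a : Fin 1 → ℕ) : PA 1 a = a 0 := by
  simp [PA, Finset.prod_range_succ]

lemma set_zero (N : ℕ) (hN : 0 < N) : {p ∈ SLSet N | p.1 = 0}.Finite ∧ {p ∈ SLSet N | p.1 = 0}.ncard ≤ N - 1 := by
  have hm : ∀ p ∈ {p ∈ SLSet N | p.1 = 0}, p.2 0 ∈ ((Finset.Icc 2 N : Finset ℕ) : Set ℕ) := by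
    rintro ⟨k, a⟩ ⟨hp, hk⟩
    dsimp only at hk
    subst hk
    obtain ⟨i, hi⟩ := hp.2.1
    have hi0 : i = 0 := Subsingleton.elim (α := Fin 1) _ _
    subst hi0
    have := hp.2.2
    dsimp only at this
    rw [PA_one] at this
    simp only [Finset.coe_Icc, Set.mem_Icc]
    exact ⟨hi, by exact_mod_cast this⟩
  have hi : Set.InjOn (fun p : (Σ k : ℕ, Fin (k + 1) → ℕ) => p.2 0) {p ∈ SLSet N | p.1 = 0} := by
    rintro ⟨k, a⟩ ⟨_, hk⟩ ⟨k', a'⟩ ⟨_, hk'⟩ h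
    dsimp only at hk hk' h
    subst hk
    subst hk'
    congr 1
    ext i
    have hi0 : i = 0 := Subsingleton.elim (α := Fin 1) _ _
    rw [hi0, h]
  refine ⟨Set.Finite.of_injOn hm hi (Finset.finite_toSet _), ?_⟩
  refine (Set.ncard_le_ncard_of_injOn _ hm hi (Finset.finite_toSet _)).trans ?_
  rw [Set.ncard_coe_finset, Nat.card_Icc]
  omega

lemma set_uniq (N : ℕ) (p : (k : ℕ) → (Fin k → ℕ) → Prop) (hu : ∀ k l l', p k l → p k l' → l = l')
    (hW : ∀ k, W (k+1) (p (k+1)) ≤ ENNReal.ofReal (1 / ((k:ℝ)+2))) :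
    {q ∈ SLSet N | p (q.1+1) (sh q)}.Finite ∧ {q ∈ SLSet N | p (q.1+1) (sh q)}.ncard ≤ N := by
  have hm : ∀ q ∈ {q ∈ SLSet N | p (q.1+1) (sh q)}, q.1 ∈ ((Finset.range N : Finset ℕ) : Set ℕ) := by
    rintro q ⟨hq, hp⟩
    have := PA_ge (q.1+1) (p (q.1+1)) (sh q) hp (q.1+2) N (by omega) (by
      push_cast; exact hW q.1) (by rw [sh_add N q hq]; exact hq.2.2)
    simp only [Finset.coe_range, Set.mem_Iio]
    omega
  have hi : Set.InjOn (fun q : (Σ k : ℕ, Fin (k + 1) → ℕ) => q.1) {q ∈ SLSet N | p (q.1+1) (sh q)} := by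
    rintro ⟨k, a⟩ ⟨hq, hp⟩ ⟨k', a'⟩ ⟨hq', hp'⟩ h
    dsimp only at h
    subst h
    have := hu _ _ _ hp hp'
    have h1 := sh_add N _ hq
    have h2 := sh_add N _ hq'
    rw [this] at h1
    congr 1
    exact h1.symm.trans h2
  refine ⟨Set.Finite.of_injOn hm hi (Finset.finite_toSet _), ?_⟩
  refine (Set.ncard_le_ncard_of_injOn _ hm hi (Finset.finite_toSet _)).trans ?_
  rw [Set.ncard_coe_finset, Finset.card_range]

open Classical in
lemma set_E (N : ℕ) (hN : 0 < N) :
    {q ∈ SLSet N | 1 ≤ q.1 ∧ pE (q.1+1) (sh q)}.Finite ∧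
    {q ∈ SLSet N | 1 ≤ q.1 ∧ pE (q.1+1) (sh q)}.ncard ≤ 40 * N := by
  have hN' : (0:ℝ) < N := by exact_mod_cast hN
  set F : (Σ j : ℕ, Fin (j + 2) → ℕ) → ℝ≥0∞ := fun q => if pE (q.1+2) q.2 then w (q.1+2) q.2 else 0 with hF
  have hs : ∑' q, F q ≤ ENNReal.ofReal 40 := by
    rw [ENNReal.tsum_sigma']
    exact tsum_E
  obtain ⟨hf, hc⟩ := ENNReal.finset_card_const_le_le_of_tsum_le ENNReal.ofReal_ne_top hs
    (ε := ENNReal.ofReal (1/(N:ℝ))) (by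
      rw [Ne, ENNReal.ofReal_eq_zero, not_le]; positivity)
  rw [← ENNReal.ofReal_div_of_pos (by positivity)] at hc
  have hc' : hf.toFinset.card ≤ 40 * N := by
    rw [← ENNReal.ofReal_natCast, ENNReal.ofReal_le_ofReal_iff (by positivity)] at hc
    rw [div_div_eq_mul_div, div_one] at hc
    exact_mod_cast hc
  set φ : (Σ j : ℕ, Fin (j + 2) → ℕ) → (Σ k : ℕ, Fin (k + 1) → ℕ) := fun q => ⟨q.1+1, fun i => q.2 i + 1⟩ with hφ
  have hsub : {q ∈ SLSet N | 1 ≤ q.1 ∧ pE (q.1+1) (sh q)} ⊆ φ '' {q | ENNReal.ofReal (1/(N:ℝ)) ≤ F q} := by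
    rintro ⟨k, a⟩ ⟨hq, hk, hp⟩
    dsimp only at hk
    obtain ⟨j, rfl⟩ : ∃ j, k = j + 1 := ⟨k-1, by omega⟩
    have h1 := sh_add N _ hq
    refine ⟨⟨j, sh ⟨j+1, a⟩⟩, ?_, ?_⟩
    · simp only [Set.mem_ofPred_eq, hF]
      rw [if_pos hp]
      unfold w
      apply ENNReal.ofReal_le_ofReal
      have hpos : (0:ℝ) < ((PA (j+2) (fun i => sh ⟨j+1, a⟩ i + 1) : ℚ) : ℝ) := by
        exact_mod_cast PA_pos (j+2) (sh ⟨j+1, a⟩)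
      have hle : ((PA (j+2) (fun i => sh ⟨j+1, a⟩ i + 1) : ℚ) : ℝ) ≤ N := by
        have := hq.2.2
        rw [← h1] at this
        exact_mod_cast this
      exact one_div_le_one_div_of_le hpos hle
    · simp only [hφ]
      congr 1
  have hfi := hf.image φ
  refine ⟨hfi.subset hsub, (Set.ncard_le_ncard hsub hfi).trans ?_⟩
  refine (Set.ncard_image_le hf).trans ?_
  rw [Set.ncard_eq_toFinset_card _ hf]
  exact hc'

/-- `R_N(SL) < 43 N`. -/
theorem sl_count_lt (N : ℕ) (hN : 0 < N) :
    (SLSet N).Finite ∧ (SLSet N).ncard < 43 * N := by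
  obtain ⟨f0, c0⟩ := set_zero N hN
  obtain ⟨f1, c1⟩ := set_uniq N pS pS_inj W_S
  obtain ⟨f2, c2⟩ := set_uniq N pU pU_inj W_U
  obtain ⟨f3, c3⟩ := set_E N hN
  have hsub : SLSet N ⊆ ({p ∈ SLSet N | p.1 = 0} ∪ {q ∈ SLSet N | pS (q.1+1) (sh q)}) ∪
      ({q ∈ SLSet N | pU (q.1+1) (sh q)} ∪ {q ∈ SLSet N | 1 ≤ q.1 ∧ pE (q.1+1) (sh q)}) := by
    intro q hq
    rcases Nat.eq_zero_or_pos q.1 with h | h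
    · exact Or.inl (Or.inl ⟨hq, h⟩)
    · rcases cover (q.1+1) (by omega) (sh q) (sh_pN N q hq) with h1 | h1 | h1
      · exact Or.inl (Or.inr ⟨hq, h1⟩)
      · exact Or.inr (Or.inl ⟨hq, h1⟩)
      · exact Or.inr (Or.inr ⟨hq, h, h1⟩)
  have hf := (f0.union f1).union (f2.union f3)
  refine ⟨hf.subset hsub, ?_⟩
  have h1 := Set.ncard_le_ncard hsub hf
  have h2 := Set.ncard_union_le ({p ∈ SLSet N | p.1 = 0} ∪ {q ∈ SLSet N | pS (q.1+1) (sh q)})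
      ({q ∈ SLSet N | pU (q.1+1) (sh q)} ∪ {q ∈ SLSet N | 1 ≤ q.1 ∧ pE (q.1+1) (sh q)})
  have h3 := Set.ncard_union_le {p ∈ SLSet N | p.1 = 0} {q ∈ SLSet N | pS (q.1+1) (sh q)}
  have h4 := Set.ncard_union_le {q ∈ SLSet N | pU (q.1+1) (sh q)} {q ∈ SLSet N | 1 ≤ q.1 ∧ pE (q.1+1) (sh q)}
  omega
end

section
/- Let N ≥ 49 be an integer and let k be an integer with k² ≥ N. Then every tuple a = (a_1, …, a_k) of positive integers with P_A(a) ≤ N satisfies a_1 ≤ 3, a_2 ≤ 2, a_{k−1} ≤ 2, a_k ≤ 3, and a_i = 1 for all i with 3 ≤ i ≤ k − 2. -/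
def GG (p q c : ℕ) : ℚ :=
  ∏ i ∈ Finset.range p, ∏ j ∈ Finset.range q, (((i : ℚ) + j + 1 + c) / ((i : ℚ) + j + 1))

theorem GG_comm (p q c : ℕ) : GG p q c = GG q p c := by
  unfold GG
  rw [Finset.prod_comm]
  refine Finset.prod_congr rfl fun i _ => Finset.prod_congr rfl fun j _ => ?_
  rw [add_comm (j : ℚ) i]

theorem GG_one (q : ℕ) : GG 1 q 3 = ((q : ℚ) + 1) * (q + 2) * (q + 3) / 6 := by
  unfold GG
  simp only [Finset.prod_range_one]
  induction q with
  | zero => norm_num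
  | succ n ih =>
    rw [Finset.prod_range_succ, ih]
    push_cast
    have : (n : ℚ) + 1 ≠ 0 := by positivity
    field_simp
    ring

theorem GG_two (q : ℕ) :
    GG 2 q 2 = ((q : ℚ) + 1) * (q + 2) / 2 * ((q + 2) * (q + 3) / 6) := by
  rw [GG_comm]
  unfold GG
  simp only [Finset.prod_range_succ, Finset.prod_range_zero]
  induction q with
  | zero => norm_num
  | succ n ih =>
    rw [Finset.prod_range_succ, ih]
    push_cast
    have : (n : ℚ) + 1 ≠ 0 := by positivity
    have : (n : ℚ) + 2 ≠ 0 := by positivity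
    have : (n : ℚ) + 1 + 1 ≠ 0 := by positivity
    field_simp
    ring

theorem GG_row (i q : ℕ) : ∏ j ∈ Finset.range q, (((i : ℚ) + j + 1 + 1) / ((i : ℚ) + j + 1))
    = ((i : ℚ) + q + 1) / (i + 1) := by
  induction q with
  | zero =>
    have : (i : ℚ) + 1 ≠ 0 := by positivity
    simp [this]
  | succ n ih =>
    rw [Finset.prod_range_succ, ih]
    push_cast
    have : (i : ℚ) + 1 ≠ 0 := by positivity
    have : (i : ℚ) + n + 1 ≠ 0 := by positivity
    field_simp
    ring

theorem GG_choose (p q : ℕ) : GG p q 1 = ((p + q).choose p : ℚ) := by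
  unfold GG
  simp only [Nat.cast_one, GG_row]
  induction p with
  | zero => simp
  | succ n ih =>
    rw [Finset.prod_range_succ, ih]
    have h := Nat.add_one_mul_choose_eq (n + q) n
    have h2 : ((n : ℚ) + q + 1) * ((n + q).choose n : ℚ)
        = ((n + 1 + q).choose (n + 1) : ℚ) * (n + 1) := by
      rw [show n + 1 + q = (n + q).succ by simp; omega]
      exact_mod_cast h
    have : (n : ℚ) + 1 ≠ 0 := by positivity
    field_simp
    linarith

theorem choose_three_le_half (n r : ℕ) (h3 : 3 ≤ r) (hr : r ≤ n / 2) :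
    n.choose 3 ≤ n.choose r := by
  induction r, h3 using Nat.le_induction with
  | base => exact le_rfl
  | succ r _ ih =>
    exact (ih (by omega)).trans (Nat.choose_le_succ_of_lt_half_left (by omega))

theorem choose_three_le (p q : ℕ) (hp : 3 ≤ p) (hq : 3 ≤ q) :
    (p + q).choose 3 ≤ (p + q).choose p := by
  by_cases h : p ≤ q
  · exact choose_three_le_half _ _ hp (by omega)
  · rw [Nat.choose_symm_add]
    exact choose_three_le_half _ _ hq (by omega)

theorem choose_three_val (n : ℕ) : ((n + 2).choose 3 : ℚ) = (n + 2) * (n + 1) * n / 6 := by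
  induction n with
  | zero => simp [Nat.choose]
  | succ n ih =>
    rw [show n + 1 + 2 = (n + 2) + 1 by ring, Nat.choose_succ_succ' (n+2) 2]
    push_cast
    rw [ih, Nat.cast_choose_two]
    push_cast
    ring

theorem PA_ge_s12 (k p q c : ℕ) (hp : 1 ≤ p) (hpq : p + q = k + 1) (a : Fin k → ℕ)
    (hpos : ∀ i, 1 ≤ a i) (m : Fin k) (hm : (m : ℕ) + 1 = p) (hc : c + 1 ≤ a m) :
    GG p q c ≤ PA k a := by
  have key : GG p q c = ∏ i ∈ Finset.range (k + 1), ∏ j ∈ Finset.range (k + 1),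
      if i < p ∧ p ≤ j then (((j : ℚ) - i + c) / ((j : ℚ) - i)) else 1 := by
    rw [← hpq, Finset.prod_range_add]
    have h2 : ∏ x ∈ Finset.range q, ∏ j ∈ Finset.range (p + q),
        (if p + x < p ∧ p ≤ j then (((j : ℚ) - (p + x : ℕ) + c) / ((j : ℚ) - (p + x : ℕ))) else 1)
        = 1 := by
      refine Finset.prod_eq_one fun x _ => Finset.prod_eq_one fun j _ => ?_
      rw [if_neg (by omega)]
    rw [h2, mul_one]
    unfold GG
    rw [← Finset.prod_range_reflect]
    refine Finset.prod_congr rfl fun i hi => ?_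
    rw [Finset.mem_range] at hi
    rw [Finset.prod_range_add]
    have h1 : ∏ x ∈ Finset.range p,
        (if i < p ∧ p ≤ x then (((x : ℚ) - i + c) / ((x : ℚ) - i)) else 1) = 1 := by
      refine Finset.prod_eq_one fun j hj => ?_
      rw [Finset.mem_range] at hj
      rw [if_neg (by omega)]
    rw [h1, one_mul]
    refine Finset.prod_congr rfl fun j hj => ?_
    rw [if_pos (by omega)]
    have e : ((p - 1 - i : ℕ) : ℚ) = p - 1 - i := by
      rw [Nat.cast_sub (by omega), Nat.cast_sub hp]; simp
    rw [e]
    push_cast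
    congr 1 <;> ring
  rw [key]
  unfold PA
  have nn : ∀ i j : ℕ, (0:ℚ) ≤
      if i < p ∧ p ≤ j then (((j : ℚ) - i + c) / ((j : ℚ) - i)) else 1 := by
    intro i j
    split_ifs with h
    · have : (i : ℚ) < j := by exact_mod_cast (by omega : i < j)
      have : (0:ℚ) < j - i := by linarith
      positivity
    · norm_num
  refine Finset.prod_le_prod (fun i _ => Finset.prod_nonneg fun j _ => nn i j) fun i hi =>
    Finset.prod_le_prod (fun j _ => nn i j) fun j hj => ?_
  rw [Finset.mem_range] at hi hj
  by_cases hij : i < j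
  · rw [if_pos hij]
    have hlt : (i : ℚ) < j := by exact_mod_cast hij
    have hd : (0:ℚ) < j - i := by linarith
    have hcard : ∑ t ∈ Finset.Ico i j, (1:ℚ) = j - i := by
      simp [Nat.cast_sub hij.le]
    split_ifs with h
    · refine div_le_div_of_nonneg_right ?_ hd.le
      have hs : ∑ t ∈ Finset.Ico i j, ((1:ℚ) + if t = (m : ℕ) then (c : ℚ) else 0) = j - i + c := by
        rw [Finset.sum_add_distrib, hcard, Finset.sum_ite_eq', if_pos]
        rw [Finset.mem_Ico]; omega
      rw [← hs]
      refine Finset.sum_le_sum fun t ht => ?_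
      rw [Finset.mem_Ico] at ht
      rw [dif_pos (by omega)]
      split_ifs with htm
      · have : (⟨t, by omega⟩ : Fin k) = m := Fin.ext htm
        rw [this]
        exact_mod_cast (by omega : 1 + c ≤ a m)
      · rw [add_zero]
        exact_mod_cast hpos _
    · rw [one_le_div hd, ← hcard]
      refine Finset.sum_le_sum fun t ht => ?_
      rw [Finset.mem_Ico] at ht
      rw [dif_pos (by omega)]
      exact_mod_cast hpos _
  · rw [if_neg hij, if_neg (by omega)]

theorem pa_small_entries (N k : ℕ) (hN : 49 ≤ N) (hk : N ≤ k ^ 2)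
    (a : Fin k → ℕ) (hpos : ∀ i, 1 ≤ a i) (hdim : PA k a ≤ (N : ℚ)) :
    ∀ i : Fin k,
      ((i : ℕ) = 0 → a i ≤ 3) ∧
      ((i : ℕ) = 1 → a i ≤ 2) ∧
      ((i : ℕ) = k - 2 → a i ≤ 2) ∧
      ((i : ℕ) = k - 1 → a i ≤ 3) ∧
      (2 ≤ (i : ℕ) → (i : ℕ) ≤ k - 3 → a i = 1) := by
  have hk7 : 7 ≤ k := by nlinarith
  have hkq : (7:ℚ) ≤ k := by exact_mod_cast hk7
  have hle : PA k a ≤ (k : ℚ) ^ 2 := hdim.trans (by exact_mod_cast hk)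
  have b1 : (k : ℚ) ^ 2 < GG 1 k 3 := by
    rw [GG_one]
    nlinarith [mul_pos (by linarith : (0:ℚ) < k) (by linarith : (0:ℚ) < k), pow_pos (by linarith : (0:ℚ) < k) 3]
  have b2 : (k : ℚ) ^ 2 < GG 2 (k - 1) 2 := by
    rw [GG_two, Nat.cast_sub (by omega)]
    push_cast
    have e1 : (k : ℚ) < (k - 1 + 1) * (k - 1 + 2) / 2 := by nlinarith
    have e2 : (k : ℚ) < (k - 1 + 2) * (k - 1 + 3) / 6 := by nlinarith
    rw [pow_two]
    exact mul_lt_mul'' e1 e2 (by linarith) (by linarith)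
  intro i
  have hi := i.2
  refine ⟨fun h => ?_, fun h => ?_, fun h => ?_, fun h => ?_, fun h h' => ?_⟩
  · by_contra hc
    have := PA_ge_s12 k 1 k 3 (by omega) (by omega) a hpos i (by omega) (by omega)
    linarith
  · by_contra hc
    have := PA_ge_s12 k 2 (k - 1) 2 (by omega) (by omega) a hpos i (by omega) (by omega)
    linarith
  · by_contra hc
    have := PA_ge_s12 k (k - 1) 2 2 (by omega) (by omega) a hpos i (by omega) (by omega)
    rw [GG_comm] at this
    linarith
  · by_contra hc
    have := PA_ge_s12 k k 1 3 (by omega) (by omega) a hpos i (by omega) (by omega)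
    rw [GG_comm] at this
    linarith
  · by_contra hc
    have h1 := hpos i
    have := PA_ge_s12 k (i + 1) (k - i) 1 (by omega) (by omega) a hpos i (by omega) (by omega)
    rw [GG_choose] at this
    have h3 := choose_three_le (i + 1) (k - i) (by omega) (by omega)
    have h3' : (((i + 1 + (k - i) : ℕ).choose 3 : ℕ) : ℚ) ≤ ((i + 1 + (k - i) : ℕ).choose (i + 1) : ℕ) := by
      exact_mod_cast h3
    have e := choose_three_val (k - 1)
    rw [show k - 1 + 2 = (i : ℕ) + 1 + (k - i) by omega, Nat.cast_sub (by omega)] at e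
    push_cast at e
    have b3 : (k : ℚ) ^ 2 < (k - 1 + 2) * (k - 1 + 1) * (k - 1) / 6 := by
      nlinarith [mul_nonneg (by linarith : (0:ℚ) ≤ k) (mul_nonneg (by linarith : (0:ℚ) ≤ k - 7) (by linarith : (0:ℚ) ≤ k))]
    linarith
end
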